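/- arXiv:2303.05932 — 3 statements merged into one kernel-verified Lean document; each statement's English description precedes it below -/
import Mathlib

section
/- Let ℓ be a prime and n a natural number. The number of finitely supported functions w which assign to each triple (a, 𝔠, j) — where a ∈ ℕ, 𝔠 ∈ 𝒞 and 1 ≤ j ≤ (ℓ−1)^{t(𝔠)} — an ℓ-core partition w(a, 𝔠, j), subject to the condition Σ_{(a,𝔠,j)} ℓ^{a+|𝔠|} · |w(a,𝔠,j)| = n, is equal to the number of partitions of n. (This is the combinatorial content of the weight count for the fusion system of the compact Lie group U(n) at the prime ℓ: the number of weights equals |Irr(S_n)| = p(n).) -/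
/-- The sum `|𝔠| = c₁ + ⋯ + c_t` of a finite sequence `𝔠` of strictly positive integers. -/
def csum (c : List ℕ+) : ℕ := (c.map fun x => (x : ℕ)).sum

/-- The beta-set (set of first-column hook lengths) of a partition `p`, computed with `N`
beads: if the parts of `p` in decreasing order (padded with zeros to length `N`) are
`λ₁ ≥ λ₂ ≥ … ≥ λ_N`, then `betaSet p N = {λ₁ + N - 1, λ₂ + N - 2, …, λ_N}`. -/
def betaSet {n : ℕ} (p : Nat.Partition n) (N : ℕ) : Finset ℕ :=
  (Finset.range N).image fun i => ((p.parts.sort (· ≥ ·)).getD i 0) + (N - 1 - i)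

/-- A partition is an `ℓ`-core if (for every `N` at least the number of parts) its beta-set
`B` on `N` beads satisfies: every `b ∈ B` with `b ≥ ℓ` has `b - ℓ ∈ B`.  This is equivalent
to the Young diagram having no hook of length `ℓ`. -/
def IsCore (ℓ : ℕ) {n : ℕ} (p : Nat.Partition n) : Prop :=
  ∀ N : ℕ, Multiset.card p.parts ≤ N →
    ∀ b ∈ betaSet p N, ℓ ≤ b → b - ℓ ∈ betaSet p N

namespace WC

abbrev P := Σ m : ℕ, Nat.Partition m

def row (p : P) (i : ℕ) : ℕ := (p.2.parts.sort (· ≥ ·)).getD i 0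

def len (p : P) : ℕ := Multiset.card p.2.parts

def beta (p : P) (N : ℕ) : Finset ℕ := betaSet p.2 N

theorem beta_def (p : P) (N : ℕ) :
    beta p N = (Finset.range N).image fun i => row p i + (N - 1 - i) := rfl

theorem getD_filter (L : List ℕ) (h : L.Pairwise (· ≥ ·)) (i : ℕ) :
    (L.filter (· ≠ 0)).getD i 0 = L.getD i 0 := by
  induction L generalizing i with
  | nil => simp
  | cons a L ih =>
    rw [List.pairwise_cons] at h
    by_cases ha : a = 0
    · subst ha
      have h0 : ∀ x ∈ L, x = 0 := fun x hx => by have := h.1 x hx; omega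
      have : (0 :: L).filter (· ≠ 0) = [] := by
        rw [List.filter_eq_nil_iff]; intro x hx
        rcases List.mem_cons.1 hx with rfl | hx
        · simp
        · simp [h0 x hx]
      rw [this]
      cases i with
      | zero => simp
      | succ i =>
        simp only [List.getD_cons_succ, List.getD_nil]
        by_cases hi : i < L.length
        · rw [List.getD_eq_getElem _ _ hi, h0 _ (List.getElem_mem hi)]
        · rw [List.getD_eq_default _ _ (by omega)]
    · rw [List.filter_cons_of_pos (by simpa using ha)]
      cases i with
      | zero => simp
      | succ i => simpa using ih h.2 i

theorem row_anti (p : P) : Antitone (row p) := by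
  intro i j hij
  unfold row
  set L := p.2.parts.sort (· ≥ ·) with hL
  have hs : L.Pairwise (· ≥ ·) := Multiset.pairwise_sort _ _
  by_cases hj : j < L.length
  · rw [List.getD_eq_getElem _ _ hj, List.getD_eq_getElem _ _ (by omega)]
    rcases hij.eq_or_lt with rfl | h
    · exact le_rfl
    · exact (List.pairwise_iff_getElem.1 hs) i j (by omega) hj h
  · rw [List.getD_eq_default _ _ (by omega)]; exact Nat.zero_le _

theorem row_zero (p : P) {i : ℕ} (h : len p ≤ i) : row p i = 0 := by
  unfold row
  rw [List.getD_eq_default]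
  simpa [len] using h

theorem map_row (p : P) {N : ℕ} (h : len p ≤ N) :
    (List.range N).map (row p) = p.2.parts.sort (· ≥ ·) ++ List.replicate (N - len p) 0 := by
  have hl : (p.2.parts.sort (· ≥ ·)).length = len p := by simp [len]
  apply List.ext_getElem
  · simp [len] at *; omega
  · intro i h1 h2
    simp only [List.getElem_map, List.getElem_range, row]
    by_cases hi : i < len p
    · rw [List.getElem_append_left (by omega), List.getD_eq_getElem _ _ (by omega)]
    · rw [List.getElem_append_right (by omega), List.getD_eq_default _ _ (by omega)]
      simp

theorem sum_row (p : P) {N : ℕ} (h : len p ≤ N) : ∑ i ∈ Finset.range N, row p i = p.1 := by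
  have h1 := congrArg List.sum (map_row p h)
  rw [List.sum_append] at h1
  have h2 : (p.2.parts.sort (· ≥ ·)).sum = p.1 := by
    rw [← Multiset.sum_coe, Multiset.sort_eq, p.2.parts_sum]
  rw [h2] at h1
  have h3 : ∑ i ∈ Finset.range N, row p i = ((List.range N).map (row p)).sum := by
    rw [Finset.sum_eq_multiset_sum, Finset.range_val, Multiset.range, Multiset.map_coe, Multiset.sum_coe]
  simpa [h3] using h1

theorem P_ext {p q : P} (h : p.2.parts = q.2.parts) : p = q := by
  obtain ⟨m, p⟩ := p
  obtain ⟨n, q⟩ := q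
  have : m = n := by rw [← p.parts_sum, ← q.parts_sum]; exact congrArg _ h
  subst this
  have : p = q := Nat.Partition.ext h
  rw [this]

theorem row_inj {p q : P} (N : ℕ) (hp : len p ≤ N) (hq : len q ≤ N)
    (h : ∀ i < N, row p i = row q i) : p = q := by
  apply P_ext
  have e : (List.range N).map (row p) = (List.range N).map (row q) :=
    List.map_congr_left (fun i hi => h i (List.mem_range.1 hi))
  have key : ∀ r : P, len r ≤ N →
      (((List.range N).map (row r)).filter (· ≠ 0) : Multiset ℕ) = r.2.parts := by
    intro r hr
    rw [map_row r hr, List.filter_append]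
    have h1 : (List.replicate (N - len r) 0).filter (· ≠ 0) = [] := by simp
    have h2 : (r.2.parts.sort (· ≥ ·)).filter (· ≠ 0) = r.2.parts.sort (· ≥ ·) := by
      rw [List.filter_eq_self]
      intro a ha
      have := r.2.parts_pos ((Multiset.mem_sort _).1 ha)
      simp; omega
    rw [h1, h2, List.append_nil, Multiset.sort_eq]
  rw [← key p hp, ← key q hq, e]

theorem exists_row (f : ℕ → ℕ) (hf : Antitone f) (N : ℕ) (h0 : ∀ i, N ≤ i → f i = 0) :
    ∃ p : P, len p ≤ N ∧ ∀ i, row p i = f i := by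
  set L := (List.range N).map f with hL
  have hs : L.Pairwise (· ≥ ·) := by
    rw [hL, List.pairwise_map]
    exact List.pairwise_lt_range.imp (fun h => hf h.le)
  have hparts : (Nat.Partition.ofMultiset (L : Multiset ℕ)).parts = (L.filter (· ≠ 0) : List ℕ) := by
    simp [Nat.Partition.ofMultiset, Nat.Partition.ofSums]
  refine ⟨⟨_, Nat.Partition.ofMultiset (L : Multiset ℕ)⟩, ?_, ?_⟩
  · unfold len
    rw [hparts, Multiset.coe_card]
    exact (List.length_filter_le _ _).trans (by simp [hL])
  · intro i
    unfold row
    rw [hparts, Multiset.coe_sort, List.mergeSort_eq_self, getD_filter _ hs]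
    · by_cases hi : i < N
      · rw [List.getD_eq_getElem _ _ (by simpa [hL] using hi)]; simp [hL]
      · rw [List.getD_eq_default _ _ (by simpa [hL] using hi), h0 i (by omega)]
    · exact (hs.filter _).imp (by simp)

theorem bet_lt (p : P) (N : ℕ) {i j : ℕ} (hij : i < j) (hj : j < N) :
    row p j + (N - 1 - j) < row p i + (N - 1 - i) := by
  have := row_anti p hij.le
  omega

theorem bet_inj (p : P) (N : ℕ) :
    Set.InjOn (fun i => row p i + (N - 1 - i)) (Finset.range N : Set ℕ) := by
  intro i hi j hj h
  simp at hi hj h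
  rcases lt_trichotomy i j with h1 | h1 | h1
  · have := bet_lt p N h1 hj; omega
  · exact h1
  · have := bet_lt p N h1 hi; omega

theorem card_beta (p : P) (N : ℕ) : (beta p N).card = N := by
  rw [beta_def, Finset.card_image_of_injOn (bet_inj p N), Finset.card_range]

theorem sum_beta (p : P) {N : ℕ} (h : len p ≤ N) :
    ∑ b ∈ beta p N, b = p.1 + ∑ i ∈ Finset.range N, i := by
  rw [beta_def, Finset.sum_image (bet_inj p N), Finset.sum_add_distrib, sum_row p h,
    Finset.sum_range_reflect (fun i => i) N]

theorem beta_inj {p q : P} (N : ℕ) (hp : len p ≤ N) (hq : len q ≤ N)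
    (h : beta p N = beta q N) : p = q := by
  apply row_inj N hp hq
  have srt : ∀ r : P, ((List.range N).map (fun i => row r i + (N - 1 - i))).Pairwise (· > ·) := by
    intro r
    rw [List.pairwise_map]
    rw [List.pairwise_iff_getElem]
    intro i j hi hj hij
    simp at hi hj ⊢
    exact bet_lt r N hij hj
  have e : (List.range N).map (fun i => row p i + (N - 1 - i)) =
      (List.range N).map (fun i => row q i + (N - 1 - i)) := by
    apply List.Perm.eq_of_pairwise (le := (· > ·)) _ (srt p) (srt q)
    · rw [List.perm_ext_iff_of_nodup ((srt p).imp (fun h => ne_of_gt h)) ((srt q).imp (fun h => ne_of_gt h))]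
      intro a
      have := Finset.ext_iff.1 h a
      simpa [beta_def] using this
    · intro a b _ _ h1 h2; omega
  intro i hi
  have := List.map_inj_left.1 e i (List.mem_range.2 hi)
  simpa using this

theorem exists_beta (B : Finset ℕ) : ∃ p : P, len p ≤ B.card ∧ beta p B.card = B := by
  set N := B.card with hN
  set b := B.orderEmbOfFin hN.symm
  have hb : ∀ i j : ℕ, ∀ hi : i < N, ∀ hj : j < N, i ≤ j →
      b ⟨i, hi⟩ + (j - i) ≤ b ⟨j, hj⟩ := by
    intro i j hi hj hij
    induction j, hij using Nat.le_induction with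
    | base => simp
    | succ j hij ih =>
      have h1 := ih (by omega)
      have h2 : b ⟨j, by omega⟩ < b ⟨j + 1, hj⟩ := b.strictMono (by simp [Fin.lt_def])
      omega
  have hb0 : ∀ i : ℕ, ∀ hi : i < N, i ≤ b ⟨i, hi⟩ := by
    intro i hi
    have := hb 0 i (by omega) hi (by omega)
    omega
  obtain ⟨p, hp, hr⟩ := exists_row
    (fun i => if h : i < N then b ⟨N - 1 - i, by omega⟩ - (N - 1 - i) else 0) (by
      intro i j hij
      by_cases hj : j < N
      · have hi : i < N := by omega
        simp only [hi, hj, dif_pos]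
        have := hb (N - 1 - j) (N - 1 - i) (by omega) (by omega) (by omega)
        omega
      · simp [hj]) N (by intro i hi; simp; omega)
  refine ⟨p, hp, ?_⟩
  apply Finset.eq_of_subset_of_card_le
  · intro x hx
    rw [beta_def, Finset.mem_image] at hx
    obtain ⟨i, hi, rfl⟩ := hx
    rw [Finset.mem_range] at hi
    rw [hr]
    simp only [hi, dif_pos]
    rw [Nat.sub_add_cancel (hb0 _ _)]
    exact Finset.orderEmbOfFin_mem _ _ _
  · rw [card_beta]

theorem beta_succ (p : P) {N : ℕ} (h : len p ≤ N) (x : ℕ) :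
    x ∈ beta p (N + 1) ↔ x = 0 ∨ ∃ y ∈ beta p N, x = y + 1 := by
  simp only [beta_def, Finset.mem_image, Finset.mem_range]
  constructor
  · rintro ⟨i, hi, rfl⟩
    by_cases hiN : i = N
    · left; subst hiN; rw [row_zero p h]; omega
    · right; exact ⟨_, ⟨i, by omega, rfl⟩, by omega⟩
  · rintro (rfl | ⟨y, ⟨i, hi, rfl⟩, rfl⟩)
    · exact ⟨N, by omega, by rw [row_zero p h]; omega⟩
    · exact ⟨i, by omega, by omega⟩

theorem beta_add (p : P) {N : ℕ} (h : len p ≤ N) (d x : ℕ) :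
    x ∈ beta p (N + d) ↔ x < d ∨ ∃ y ∈ beta p N, x = y + d := by
  induction d generalizing x with
  | zero => simp
  | succ d ih =>
    rw [← add_assoc, beta_succ p (by omega)]
    constructor
    · rintro (rfl | ⟨y, hy, rfl⟩)
      · left; omega
      · rcases (ih y).1 hy with h | ⟨z, hz, rfl⟩
        · left; omega
        · right; exact ⟨z, hz, by omega⟩
    · rintro (hx | ⟨y, hy, rfl⟩)
      · rcases x with _ | x
        · left; rfl
        · right; exact ⟨x, (ih x).2 (Or.inl (by omega)), rfl⟩
      · right; exact ⟨y + d, (ih _).2 (Or.inr ⟨y, hy, rfl⟩), by omega⟩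

def Cl (ℓ : ℕ) (B : Finset ℕ) : Prop := ∀ b ∈ B, ℓ ≤ b → b - ℓ ∈ B

theorem cl_succ (ℓ : ℕ) (p : P) {N : ℕ} (h : len p ≤ N) :
    Cl ℓ (beta p (N + 1)) ↔ Cl ℓ (beta p N) := by
  constructor
  · intro H b hb hl
    have h1 := H (b + 1) ((beta_succ p h _).2 (Or.inr ⟨b, hb, rfl⟩)) (by omega)
    rcases (beta_succ p h _).1 h1 with h2 | ⟨y, hy, h2⟩
    · omega
    · have : b - ℓ = y := by omega
      rwa [this]
  · intro H b hb hl
    rw [beta_succ p h] at hb ⊢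
    rcases hb with rfl | ⟨y, hy, rfl⟩
    · left; omega
    · by_cases hy' : ℓ ≤ y
      · right; exact ⟨y - ℓ, H y hy hy', by omega⟩
      · left; omega

theorem core_iff (ℓ : ℕ) (p : P) {N : ℕ} (h : len p ≤ N) :
    IsCore ℓ p.2 ↔ Cl ℓ (beta p N) := by
  have key : ∀ d, Cl ℓ (beta p (len p + d)) ↔ Cl ℓ (beta p (len p)) := by
    intro d
    induction d with
    | zero => rfl
    | succ d ih => rw [← add_assoc, cl_succ ℓ p (by omega), ih]
  constructor
  · intro H; exact H N h
  · intro H M hM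
    obtain ⟨d, rfl⟩ := Nat.exists_eq_add_of_le h
    obtain ⟨e, rfl⟩ := Nat.exists_eq_add_of_le (show len p ≤ M from hM)
    exact (key e).2 ((key d).1 H)

section comps
variable {ℓ : ℕ}

def comp (B : Finset ℕ) (i : Fin ℓ) : Finset ℕ :=
  (B.filter (fun b => b % ℓ = i)).image (fun b => b / ℓ)

def asm (C : Fin ℓ → Finset ℕ) : Finset ℕ :=
  Finset.univ.biUnion (fun i : Fin ℓ => (C i).image (fun q => ℓ * q + i))

theorem dm (i : Fin ℓ) (q : ℕ) : (ℓ * q + i) / ℓ = q ∧ (ℓ * q + i) % ℓ = i := by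
  have hi := i.2
  have : 0 < ℓ := by omega
  constructor
  · rw [Nat.mul_add_div this, Nat.div_eq_of_lt hi, add_zero]
  · rw [Nat.mul_add_mod, Nat.mod_eq_of_lt hi]

theorem mem_comp (B : Finset ℕ) (i : Fin ℓ) (q : ℕ) : q ∈ comp B i ↔ ℓ * q + i ∈ B := by
  simp only [comp, Finset.mem_image, Finset.mem_filter]
  constructor
  · rintro ⟨b, ⟨hb, h1⟩, rfl⟩
    rwa [← h1, Nat.div_add_mod]
  · intro h
    exact ⟨_, ⟨h, (dm i q).2⟩, (dm i q).1⟩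

theorem mem_asm (C : Fin ℓ → Finset ℕ) (i : Fin ℓ) (q : ℕ) :
    ℓ * q + i ∈ asm C ↔ q ∈ C i := by
  simp only [asm, Finset.mem_biUnion, Finset.mem_univ, true_and, Finset.mem_image]
  constructor
  · rintro ⟨j, r, hr, h⟩
    have h1 : r = q := by rw [← (dm j r).1, h, (dm i q).1]
    have h2 : j = i := by apply Fin.ext; rw [← (dm j r).2, h, (dm i q).2]
    rwa [← h1, ← h2]
  · intro h; exact ⟨i, q, h, rfl⟩

theorem comp_asm (C : Fin ℓ → Finset ℕ) (i : Fin ℓ) : comp (asm C) i = C i := by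
  ext q; rw [mem_comp, mem_asm]

theorem comp_ext (hℓ : 0 < ℓ) {B B' : Finset ℕ} (h : ∀ i : Fin ℓ, comp B i = comp B' i) :
    B = B' := by
  ext b
  have e : ℓ * (b / ℓ) + ((⟨b % ℓ, Nat.mod_lt _ hℓ⟩ : Fin ℓ) : ℕ) = b := Nat.div_add_mod b ℓ
  rw [← e, ← mem_comp, ← mem_comp, h]

theorem asm_comp (hℓ : 0 < ℓ) (B : Finset ℕ) : asm (fun i : Fin ℓ => comp B i) = B :=
  comp_ext hℓ (fun i => comp_asm _ i)

theorem asm_sum (C : Fin ℓ → Finset ℕ) (f : ℕ → ℕ) :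
    ∑ b ∈ asm C, f b = ∑ i, ∑ q ∈ C i, f (ℓ * q + i) := by
  rw [asm, Finset.sum_biUnion]
  · apply Finset.sum_congr rfl
    intro i _
    rw [Finset.sum_image]
    intro q _ r _ h
    have h : ℓ * q + (i : ℕ) = ℓ * r + i := h
    rw [← (dm i q).1, h, (dm i r).1]
  · intro i _ j _ hij
    rw [Function.onFun, Finset.disjoint_left]
    intro b h1 h2
    rw [Finset.mem_image] at h1 h2
    obtain ⟨q, -, rfl⟩ := h1
    obtain ⟨r, -, h⟩ := h2
    apply hij
    apply Fin.ext
    rw [← (dm i q).2, ← h, (dm j r).2]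

theorem asm_card (C : Fin ℓ → Finset ℕ) : (asm C).card = ∑ i, (C i).card := by
  rw [Finset.card_eq_sum_ones, asm_sum]; simp

theorem asm_sum_id (C : Fin ℓ → Finset ℕ) :
    ∑ b ∈ asm C, b = ℓ * ∑ i, ∑ q ∈ C i, q + ∑ i : Fin ℓ, (C i).card * (i : ℕ) := by
  rw [asm_sum C (fun b => b), Finset.mul_sum, ← Finset.sum_add_distrib]
  apply Finset.sum_congr rfl
  intro i _
  rw [Finset.sum_add_distrib, Finset.mul_sum]; simp

theorem comp_range {B : Finset ℕ} (h : Cl ℓ B) (i : Fin ℓ) :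
    comp B i = Finset.range (comp B i).card := by
  have key : ∀ q, q + 1 ∈ comp B i → q ∈ comp B i := by
    intro q hq
    rw [mem_comp] at *
    have e : ℓ * (q + 1) + (i : ℕ) = ℓ * q + i + ℓ := by ring
    have := h _ hq (by rw [e]; omega)
    rwa [e, Nat.add_sub_cancel] at this
  have key2 : ∀ d q, q + d ∈ comp B i → q ∈ comp B i := by
    intro d
    induction d with
    | zero => intro q h; exact h
    | succ d ih => intro q h; exact ih q (key _ h)
  have hsub : comp B i ⊆ Finset.range (comp B i).card := by
    intro q hq
    have : Finset.range (q + 1) ⊆ comp B i := by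
      intro r hr
      rw [Finset.mem_range] at hr
      exact key2 (q - r) r (by rwa [Nat.add_sub_cancel' (by omega)])
    have := Finset.card_le_card this
    rw [Finset.card_range] at this
    rw [Finset.mem_range]; omega
  exact Finset.eq_of_subset_of_card_le hsub (by simp)

theorem cl_of_range {B : Finset ℕ} (hℓ : 0 < ℓ) (k : Fin ℓ → ℕ)
    (h : ∀ i : Fin ℓ, comp B i = Finset.range (k i)) : Cl ℓ B := by
  intro b hb hl
  set i : Fin ℓ := ⟨b % ℓ, Nat.mod_lt _ hℓ⟩
  have e : ℓ * (b / ℓ) + (i : ℕ) = b := Nat.div_add_mod b ℓ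
  have h1 : 1 ≤ b / ℓ := (Nat.one_le_div_iff hℓ).2 hl
  obtain ⟨q, hq⟩ := Nat.exists_eq_add_of_le' h1
  have e2 : b - ℓ = ℓ * q + i := by
    rw [hq, mul_add, mul_one] at e; omega
  rw [e2, ← mem_comp, h, Finset.mem_range]
  rw [← e, ← mem_comp, h, Finset.mem_range] at hb
  omega

structure R (M : ℕ) (k : Fin ℓ → ℕ) (l κ : P) (μ : Fin ℓ → P) : Prop where
  hl : len l ≤ ℓ * M
  hκ : len κ ≤ ℓ * M
  hμ : ∀ i, len (μ i) ≤ k i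
  cl : ∀ i, comp (beta l (ℓ * M)) i = beta (μ i) (k i)
  ck : ∀ i, comp (beta κ (ℓ * M)) i = Finset.range (k i)

theorem comp_beta_succ (l : P) (M : ℕ) (hl : len l ≤ ℓ * M) (i : Fin ℓ) (q : ℕ) :
    q ∈ comp (beta l (ℓ * (M + 1))) i ↔ q = 0 ∨ ∃ r ∈ comp (beta l (ℓ * M)) i, q = r + 1 := by
  rw [mem_comp, mul_add, mul_one, beta_add l hl]
  have hi := i.2
  rcases q with _ | q
  · simp
  · have e : ℓ * (q + 1) + (i : ℕ) = ℓ * q + i + ℓ := by ring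
    rw [e]
    constructor
    · rintro (h | ⟨y, hy, h⟩)
      · omega
      · right; refine ⟨q, ?_, rfl⟩
        rw [mem_comp]
        have : ℓ * q + (i : ℕ) = y := by omega
        rwa [this]
    · rintro (h | ⟨r, hr, h⟩)
      · omega
      · right
        have : q = r := by omega
        subst this
        exact ⟨_, (mem_comp _ _ _).1 hr, rfl⟩

theorem R.succ {M : ℕ} {k : Fin ℓ → ℕ} {l κ : P} {μ : Fin ℓ → P} (h : R M k l κ μ) :
    R (M + 1) (fun i => k i + 1) l κ μ := by
  have hl := h.hl
  have hκ := h.hκ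
  refine ⟨by rw [mul_add]; omega, by rw [mul_add]; omega, fun i => (h.hμ i).trans (by simp), ?_, ?_⟩
  · intro i; ext q
    rw [comp_beta_succ l M hl, beta_succ _ (h.hμ i), h.cl]
  · intro i; ext q
    rw [comp_beta_succ κ M hκ, h.ck]
    simp only [Finset.mem_range]
    rcases q with _ | q
    · simp
    · simp

theorem R.add {M : ℕ} {k : Fin ℓ → ℕ} {l κ : P} {μ : Fin ℓ → P} (h : R M k l κ μ) (d : ℕ) :
    R (M + d) (fun i => k i + d) l κ μ := by
  induction d with
  | zero => exact h
  | succ d ih => exact ih.succ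

theorem R.card {M : ℕ} {k : Fin ℓ → ℕ} {l κ : P} {μ : Fin ℓ → P} (h : R M k l κ μ) (i : Fin ℓ) :
    k i = (comp (beta l (ℓ * M)) i).card := by rw [h.cl, card_beta]

theorem R.card' {M : ℕ} {k : Fin ℓ → ℕ} {l κ : P} {μ : Fin ℓ → P} (h : R M k l κ μ) (i : Fin ℓ) :
    k i = (comp (beta κ (ℓ * M)) i).card := by rw [h.ck, Finset.card_range]

theorem R.size (hℓ : 0 < ℓ) {M : ℕ} {k : Fin ℓ → ℕ} {l κ : P} {μ : Fin ℓ → P}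
    (h : R M k l κ μ) : l.1 = κ.1 + ℓ * ∑ i, (μ i).1 := by
  have h1 := sum_beta l h.hl
  have h2 := sum_beta κ h.hκ
  rw [← asm_comp hℓ (beta l (ℓ * M)), asm_sum_id] at h1
  rw [← asm_comp hℓ (beta κ (ℓ * M)), asm_sum_id] at h2
  simp only [h.cl, card_beta, sum_beta _ (h.hμ _), Finset.sum_add_distrib, mul_add] at h1
  simp only [h.ck, Finset.card_range] at h2
  omega

theorem R.core (hℓ : 0 < ℓ) {M : ℕ} {k : Fin ℓ → ℕ} {l κ : P} {μ : Fin ℓ → P}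
    (h : R M k l κ μ) : IsCore ℓ κ.2 :=
  (core_iff ℓ κ h.hκ).2 (cl_of_range hℓ k h.ck)

theorem R.unique (hℓ : 0 < ℓ) {M M' : ℕ} {k k' : Fin ℓ → ℕ} {l κ κ' : P} {μ μ' : Fin ℓ → P}
    (h : R M k l κ μ) (h' : R M' k' l κ' μ') : κ = κ' ∧ μ = μ' := by
  have a := h.add M'
  have b := h'.add M
  rw [add_comm M' M] at b
  have e : (fun i => k i + M') = (fun i => k' i + M) := by
    funext i; rw [a.card i, b.card i]
  rw [← e] at b
  constructor
  · apply beta_inj _ a.hκ b.hκ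
    apply comp_ext hℓ
    intro i
    rw [a.ck, b.ck]
  · funext i
    apply beta_inj _ (a.hμ i) (b.hμ i)
    rw [← a.cl, ← b.cl]

theorem R.inj (hℓ : 0 < ℓ) {M M' : ℕ} {k k' : Fin ℓ → ℕ} {l l' κ : P} {μ : Fin ℓ → P}
    (h : R M k l κ μ) (h' : R M' k' l' κ μ) : l = l' := by
  have a := h.add M'
  have b := h'.add M
  rw [add_comm M' M] at b
  have e : (fun i => k i + M') = (fun i => k' i + M) := by
    funext i; rw [a.card' i, b.card' i]
  rw [← e] at b
  apply beta_inj _ a.hl b.hl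
  apply comp_ext hℓ
  intro i
  rw [a.cl, b.cl]

theorem R.total (hℓ : 0 < ℓ) (l : P) : ∃ M k κ, ∃ μ : Fin ℓ → P, R M k l κ μ := by
  have hl : len l ≤ ℓ * len l := Nat.le_mul_of_pos_left _ hℓ
  set B := beta l (ℓ * len l) with hB
  choose μ hμ1 hμ2 using fun i : Fin ℓ => exists_beta (comp B i)
  have hc : (asm (fun i : Fin ℓ => Finset.range (comp B i).card)).card = ℓ * len l := by
    rw [asm_card]
    simp only [Finset.card_range]
    rw [← asm_card, asm_comp hℓ, hB, card_beta]
  obtain ⟨κ, hκ1, hκ2⟩ := exists_beta (asm (fun i : Fin ℓ => Finset.range (comp B i).card))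
  rw [hc] at hκ1 hκ2
  refine ⟨len l, fun i => (comp B i).card, κ, μ, hl, hκ1, hμ1, fun i => (hμ2 i).symm, ?_⟩
  intro i
  rw [hκ2, comp_asm]

theorem R.surj (hℓ : 0 < ℓ) (κ : P) (hκ : IsCore ℓ κ.2) (μ : Fin ℓ → P) :
    ∃ M k l, R M k l κ μ := by
  set M := len κ + ∑ i, len (μ i) with hM
  have hk0 : len κ ≤ ℓ * len κ := Nat.le_mul_of_pos_left _ hℓ
  have hk : len κ ≤ ℓ * M := hk0.trans (Nat.mul_le_mul_left _ (by omega))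
  set K := beta κ (ℓ * M) with hK
  have hr := fun i => comp_range ((core_iff ℓ κ hk).1 hκ) i
  have big : ∀ d (i : Fin ℓ), Finset.range d ⊆ comp (beta κ (ℓ * (len κ + d))) i := by
    intro d i
    induction d with
    | zero => simp
    | succ d ih =>
      intro q hq
      rw [← add_assoc, comp_beta_succ κ _ (hk0.trans (Nat.mul_le_mul_left _ (by omega)))]
      rcases q with _ | q
      · left; rfl
      · right; exact ⟨q, ih (by simpa using hq), rfl⟩
  have hμ : ∀ i, len (μ i) ≤ (comp K i).card := by
    intro i
    have h1 := Finset.card_le_card (big (∑ i, len (μ i)) i)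
    rw [Finset.card_range] at h1
    exact (Finset.single_le_sum (f := fun i => len (μ i)) (fun _ _ => Nat.zero_le _)
      (Finset.mem_univ i)).trans h1
  have hc : (asm (fun i : Fin ℓ => beta (μ i) (comp K i).card)).card = ℓ * M := by
    rw [asm_card]
    simp only [card_beta]
    rw [← asm_card, asm_comp hℓ, hK, card_beta]
  obtain ⟨l, hl1, hl2⟩ := exists_beta (asm (fun i : Fin ℓ => beta (μ i) (comp K i).card))
  rw [hc] at hl1 hl2
  refine ⟨M, fun i => (comp K i).card, l, hl1, hk, hμ, ?_, hr⟩
  intro i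
  rw [hl2, comp_asm]

end comps

theorem core_quot (ℓ : ℕ) (hℓ : 0 < ℓ) : ∃ (core : P → P) (quot : P → Fin ℓ → P),
    (∀ l, IsCore ℓ (core l).2) ∧ (∀ l, l.1 = (core l).1 + ℓ * ∑ i, (quot l i).1) ∧
    (∀ l l', core l = core l' → quot l = quot l' → l = l') ∧
    (∀ κ : P, IsCore ℓ κ.2 → ∀ μ, ∃ l, core l = κ ∧ quot l = μ) := by
  choose M k core quot h using fun l => R.total hℓ l
  refine ⟨core, quot, fun l => (h l).core hℓ, fun l => (h l).size hℓ, ?_, ?_⟩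
  · intro l l' h1 h2
    have a := h l
    rw [h1, h2] at a
    exact a.inj hℓ (h l')
  · intro κ hκ μ
    obtain ⟨M, k, l, hR⟩ := R.surj hℓ κ hκ μ
    exact ⟨l, (h l).unique hℓ hR⟩

theorem csum_eq (c : List ℕ+) : csum c = (c.map PNat.val).sum := by
  unfold csum
  congr 1
  induction c with
  | nil => rfl
  | cons a c ih => simpa [List.flatMap_cons] using ih

theorem word_equiv (ℓ : ℕ) (hℓ : 2 ≤ ℓ) :
    ∃ e : (ℕ × Σ c : List ℕ+, Fin ((ℓ - 1) ^ c.length)) ≃ List (Fin ℓ),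
      ∀ i, (e i).length = i.1 + csum i.2.1 := by
  obtain ⟨k, rfl⟩ : ∃ k, ℓ = k + 1 := ⟨ℓ - 1, by omega⟩
  rw [Nat.add_sub_cancel]
  -- fibres of the first projection
  have E1 : ∀ c : List ℕ+, Nonempty (Fin (k ^ c.length) ≃
      {L : List (ℕ+ × Fin k) // L.map Prod.fst = c}) := by
    intro c
    have f1 : Fin (k ^ c.length) ≃ List.Vector (Fin k) c.length :=
      (Fintype.equivFinOfCardEq (by simp)).symm
    refine ⟨f1.trans ⟨fun v => ⟨c.zip v.1, ?_⟩, fun L => ⟨L.1.map Prod.snd, ?_⟩, ?_, ?_⟩⟩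
    · exact List.map_fst_zip (by rw [v.2])
    · simpa using congrArg List.length L.2
    · intro v
      apply Subtype.ext
      exact List.map_snd_zip (by rw [v.2])
    · rintro ⟨L, rfl⟩
      apply Subtype.ext
      exact (List.zip_of_prod rfl rfl).symm
  replace E1 := fun c => Classical.choice (E1 c)
  let E2 : (Σ c : List ℕ+, Fin (k ^ c.length)) ≃ List (ℕ+ × Fin k) :=
    (Equiv.sigmaCongrRight E1).trans (Equiv.sigmaFiberEquiv (List.map Prod.fst))
  have hE2 : ∀ x, (E2 x).map Prod.fst = x.1 := fun x => (E1 x.1 x.2).2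
  let g : List (Option (Fin k)) → ℕ × List (ℕ+ × Fin k) := fun w =>
    w.foldr (fun o r => match o with
      | none => (r.1 + 1, r.2)
      | some x => (0, (Nat.succPNat r.1, x) :: r.2)) (0, [])
  have g0 : g [] = (0, []) := rfl
  have gn : ∀ w, g (none :: w) = ((g w).1 + 1, (g w).2) := fun w => rfl
  have gs : ∀ x w, g (some x :: w) = (0, (Nat.succPNat (g w).1, x) :: (g w).2) :=
    fun x w => rfl
  have glen : ∀ w, w.length = (g w).1 + csum ((g w).2.map Prod.fst) := by
    intro w
    induction w with
    | nil => simp [g0, csum]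
    | cons o w ih =>
      cases o with
      | none => rw [gn, List.length_cons, ih]; dsimp only; omega
      | some x => 
        rw [gs, List.length_cons, ih]
        simp only [csum_eq, List.map_cons, List.sum_cons, PNat.val_ofNat, Nat.succPNat_coe, Nat.succ_eq_add_one]
        have := Nat.succPNat_coe (g w).1
        omega
  have ginj : Function.Injective g := by
    intro w
    induction w with
    | nil =>
      intro w' h
      rcases w' with _ | ⟨_ | x, w'⟩
      · rfl
      · rw [g0, gn] at h; simp at h
      · rw [g0, gs] at h; simp at h
    | cons o w ih =>
      intro w' h
      rcases o with _ | x <;> rcases w' with _ | ⟨_ | x', w'⟩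
      · rw [g0, gn] at h; simp at h
      · rw [gn, gn] at h
        simp only [Prod.mk.injEq, add_left_inj] at h
        rw [ih (Prod.ext h.1 h.2)]
      · rw [gn, gs] at h; simp at h
      · rw [g0, gs] at h; simp at h
      · rw [gn, gs] at h; simp at h
      · rw [gs, gs] at h
        rw [Prod.mk.injEq, List.cons.injEq, Prod.mk.injEq] at h
        have h1 := congrArg PNat.val h.2.1.1
        have h3 := h.2.1.2
        have h2 := h.2.2
        have h1 : (g w).1 = (g w').1 := Nat.succ_injective h1
        rw [ih (Prod.ext h1 h2), h3]
  have gsurj : Function.Surjective g := by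
    rintro ⟨a, L⟩
    induction L generalizing a with
    | nil =>
      induction a with
      | zero => exact ⟨[], rfl⟩
      | succ a ih => obtain ⟨w, hw⟩ := ih; exact ⟨none :: w, by rw [gn, hw]⟩
    | cons y L ihL =>
      induction a with
      | zero =>
        obtain ⟨c, x⟩ := y
        obtain ⟨w, hw⟩ := ihL (c - 1 : ℕ)
        refine ⟨some x :: w, ?_⟩
        rw [gs, hw]
        have : Nat.succPNat (c - 1 : ℕ) = c := by
          apply PNat.eq
          have := c.pos
          rw [Nat.succPNat_coe]; omega
        dsimp only
        rw [this]
      | succ a ih => obtain ⟨w, hw⟩ := ih; exact ⟨none :: w, by rw [gn, hw]⟩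
  let G := Equiv.ofBijective g ⟨ginj, gsurj⟩
  let e := (((Equiv.refl ℕ).prodCongr E2).trans G.symm).trans
    (Equiv.listEquivOfEquiv (finSuccEquiv k).symm)
  refine ⟨e, ?_⟩
  intro i
  have h1 : (e i).length = (G.symm (i.1, E2 i.2)).length := by
    simp [e, Equiv.listEquivOfEquiv]
    rfl
  have h2 : g (G.symm (i.1, E2 i.2)) = (i.1, E2 i.2) := G.apply_symm_apply _
  rw [h1, glen, h2, hE2]

section tower
open scoped ENNReal

variable {ℓ : ℕ}

noncomputable def T (w : List (Fin ℓ) → P) : ℝ≥0∞ := ∑' t, (ℓ : ℝ≥0∞) ^ t.length * ((w t).1 : ℝ≥0∞)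

def consEquiv (α : Type) : Unit ⊕ (α × List α) ≃ List α where
  toFun := Sum.elim (fun _ => []) (fun x => x.1 :: x.2)
  invFun := fun L => match L with
    | [] => Sum.inl ()
    | a :: L => Sum.inr (a, L)
  left_inv := by rintro (_ | ⟨a, L⟩) <;> rfl
  right_inv := by rintro (_ | ⟨a, L⟩) <;> rfl

theorem T_rec (w : List (Fin ℓ) → P) :
    T w = (w []).1 + ℓ * ∑ i, T (fun t => w (i :: t)) := by
  unfold T
  rw [← (consEquiv (Fin ℓ)).tsum_eq, ENNReal.summable.tsum_sum (by exact ENNReal.summable)]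
  congr 1
  · simp [consEquiv]
  · have := ENNReal.tsum_prod (f := fun (i : Fin ℓ) (t : List (Fin ℓ)) =>
      (ℓ : ℝ≥0∞) ^ (i :: t).length * ((w (i :: t)).1 : ℝ≥0∞))
    refine Eq.trans this ?_
    rw [tsum_fintype, Finset.mul_sum]
    apply Finset.sum_congr rfl
    intro i _
    rw [← ENNReal.tsum_mul_left]
    apply tsum_congr
    intro t
    simp only [List.length_cons, pow_succ]
    ring

def tower (core : P → P) (quot : P → Fin ℓ → P) : List (Fin ℓ) → P → P
  | [], l => core l
  | i :: t, l => tower core quot t (quot l i)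

theorem P_zero {p q : P} (hp : p.1 = 0) (hq : q.1 = 0) : p = q := by
  obtain ⟨m, p⟩ := p
  obtain ⟨n, q⟩ := q
  subst hp
  dsimp only at hq
  subst hq
  rw [Subsingleton.elim p q]

theorem main (hℓ : 2 ≤ ℓ) : ∃ Φ : P → List (Fin ℓ) → P,
    (∀ l t, IsCore ℓ (Φ l t).2) ∧ (∀ l, T (Φ l) = l.1) ∧ Function.Injective Φ ∧
    (∀ w : List (Fin ℓ) → P, (∀ t, IsCore ℓ (w t).2) → T w ≠ ∞ → ∃ l, Φ l = w) := by
  obtain ⟨core, quot, hc, hs, hi, hsu⟩ := core_quot ℓ (by omega)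
  have hlt : ∀ l i, l.1 ≠ 0 → (quot l i).1 < l.1 := by
    intro l i h0
    have h1 := hs l
    have h2 := Finset.single_le_sum (f := fun i => (quot l i).1) (fun _ _ => Nat.zero_le _)
      (Finset.mem_univ i)
    by_contra hcon
    have : 2 * ∑ i, (quot l i).1 ≤ ℓ * ∑ i, (quot l i).1 := Nat.mul_le_mul_right _ hℓ
    omega
  have hq0 : ∀ l i, l.1 = 0 → (quot l i).1 = 0 := by
    intro l i h0
    have h1 := hs l
    have h2 := Finset.single_le_sum (f := fun i => (quot l i).1) (fun _ _ => Nat.zero_le _)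
      (Finset.mem_univ i)
    have : 2 * ∑ i, (quot l i).1 ≤ ℓ * ∑ i, (quot l i).1 := Nat.mul_le_mul_right _ hℓ
    omega
  let Φ : P → List (Fin ℓ) → P := fun l t => tower core quot t l
  have Φn : ∀ l, Φ l [] = core l := fun l => rfl
  have Φc : ∀ l i t, Φ l (i :: t) = Φ (quot l i) t := fun l i t => rfl
  have Φ0 : ∀ t l, l.1 = 0 → (Φ l t).1 = 0 := by
    intro t
    induction t with
    | nil => intro l h; have := hs l; rw [Φn]; omega
    | cons i t ih => intro l h; rw [Φc]; exact ih _ (hq0 l i h)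
  have Φcore : ∀ t l, IsCore ℓ (Φ l t).2 := by
    intro t
    induction t with
    | nil => intro l; exact hc l
    | cons i t ih => intro l; exact ih _
  have ΦT : ∀ n l, l.1 = n → T (Φ l) = l.1 := by
    intro n
    induction n using Nat.strong_induction_on with
    | _ n ih =>
      intro l hl
      by_cases h0 : l.1 = 0
      · simp [T, Φ0 _ l h0, h0]
      · rw [T_rec, Φn]
        have : ∀ i, T (fun t => Φ l (i :: t)) = (quot l i).1 := by
          intro i
          exact ih _ (hl ▸ hlt l i h0) (quot l i) rfl
        simp only [this]
        conv_rhs => rw [hs l]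
        push_cast
        rfl
  refine ⟨Φ, fun l t => Φcore t l, fun l => ΦT _ l rfl, ?_, ?_⟩
  · have key : ∀ n l l', l.1 = n → Φ l = Φ l' → l = l' := by
      intro n
      induction n using Nat.strong_induction_on with
      | _ n ih =>
        intro l l' hl h
        have e : l.1 = l'.1 := by
          have h1 := ΦT _ l rfl
          rw [h, ΦT _ l' rfl] at h1
          exact_mod_cast h1.symm
        by_cases h0 : l.1 = 0
        · exact P_zero h0 (e ▸ h0)
        · apply hi
          · exact congrFun h []
          · funext i
            exact ih _ (hl ▸ hlt l i h0) _ _ rfl (funext fun t => congrFun h (i :: t))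
    exact fun l l' h => key _ l l' rfl h
  · have key : ∀ n : ℕ, ∀ w : List (Fin ℓ) → P, (∀ t, IsCore ℓ (w t).2) → T w < 2 ^ n →
        ∃ l, Φ l = w := by
      intro n
      induction n with
      | zero =>
        intro w _ hT
        refine ⟨⟨0, default⟩, ?_⟩
        funext t
        apply P_zero (Φ0 t _ rfl)
        by_contra h
        have h1 : (1 : ℝ≥0∞) ≤ (ℓ : ℝ≥0∞) ^ t.length * ((w t).1 : ℝ≥0∞) := by
          have : 1 ≤ ℓ ^ t.length * (w t).1 := Nat.mul_pos (pow_pos (by omega) _) (by omega)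
          exact_mod_cast this
        have h2 := h1.trans (ENNReal.le_tsum (f := fun t => (ℓ : ℝ≥0∞) ^ t.length * ((w t).1 : ℝ≥0∞)) t)
        rw [pow_zero] at hT
        exact absurd hT (not_lt.2 h2)
      | succ n ih =>
        intro w hw hT
        have : ∀ i, ∃ l, Φ l = fun t => w (i :: t) := by
          intro i
          apply ih _ (fun t => hw _)
          rw [T_rec] at hT
          have h1 : T (fun t => w (i :: t)) ≤ ∑ i, T (fun t => w (i :: t)) :=
            Finset.single_le_sum (f := fun i => T (fun t => w (i :: t)))
              (fun _ _ => zero_le) (Finset.mem_univ i)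
          have h2 : (2 : ℝ≥0∞) * T (fun t => w (i :: t)) ≤ ℓ * ∑ i, T (fun t => w (i :: t)) :=
            mul_le_mul' (by exact_mod_cast hℓ) h1
          have h3 := (h2.trans le_add_self).trans_lt hT
          rw [pow_succ, mul_comm] at h3
          exact lt_of_mul_lt_mul_right' h3
        choose μ hμ using this
        obtain ⟨l, h1, h2⟩ := hsu (w []) (hw []) μ
        refine ⟨l, funext fun t => ?_⟩
        cases t with
        | nil => rw [Φn, h1]
        | cons i t => rw [Φc, h2, hμ]
    intro w hw hT
    obtain ⟨n, hn⟩ := ENNReal.exists_nat_gt hT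
    refine key n w hw (hn.trans ?_)
    exact_mod_cast Nat.lt_two_pow_self

end tower

end WC
/-- Let `ℓ` be a prime and `n` a natural number.  The number of finitely supported functions
`w` assigning to each triple `(a, 𝔠, j)` — with `a ∈ ℕ`, `𝔠 ∈ 𝒞` a finite sequence of
positive integers, and `j` ranging over `(ℓ-1)^{t(𝔠)}` values — an `ℓ`-core partition
`w (a, 𝔠, j)`, subject to `∑ ℓ^{a + |𝔠|} * |w (a, 𝔠, j)| = n`, equals the number of
partitions of `n`. -/
theorem weight_count_U_n (ℓ : ℕ) (hℓ : ℓ.Prime) (n : ℕ) :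
    Set.ncard { w : (ℕ × Σ c : List ℕ+, Fin ((ℓ - 1) ^ c.length)) → Σ m : ℕ, Nat.Partition m |
      (∀ i, IsCore ℓ (w i).2) ∧
      { i | (w i).1 ≠ 0 }.Finite ∧
      ∑ᶠ i : ℕ × Σ c : List ℕ+, Fin ((ℓ - 1) ^ c.length),
        ℓ ^ (i.1 + csum i.2.1) * (w i).1 = n } =
    Fintype.card (Nat.Partition n) := by
  obtain ⟨e, he⟩ := WC.word_equiv ℓ hℓ.two_le
  obtain ⟨Φ, hc, hT, hinj, hsurj⟩ := WC.main hℓ.two_le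
  -- the two finiteness/size conditions in terms of the `ENNReal` sum
  have hfin : ∀ w : List (Fin ℓ) → WC.P, WC.T w =
      ∑' i : ℕ × Σ c : List ℕ+, Fin ((ℓ - 1) ^ c.length),
        ((ℓ ^ (i.1 + csum i.2.1) * (w (e i)).1 : ℕ) : ENNReal) := by
    intro w
    unfold WC.T
    rw [← e.tsum_eq]
    apply tsum_congr
    intro i
    rw [he]
    push_cast
    rfl
  have hsup : ∀ f : (ℕ × Σ c : List ℕ+, Fin ((ℓ - 1) ^ c.length)) → ℕ,
      f.support.Finite → ∑' i, (f i : ENNReal) = (∑ᶠ i, f i : ℕ) := by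
    intro f hf
    rw [finsum_eq_sum f hf, Nat.cast_sum]
    apply tsum_eq_sum
    intro i hi
    simpa using hi
  have hpos : ∀ i : ℕ × Σ c : List ℕ+, Fin ((ℓ - 1) ^ c.length), ℓ ^ (i.1 + csum i.2.1) ≠ 0 :=
    fun i => pow_ne_zero _ hℓ.ne_zero
  have hsupp : ∀ w : (ℕ × Σ c : List ℕ+, Fin ((ℓ - 1) ^ c.length)) → WC.P,
      (fun i => ℓ ^ (i.1 + csum i.2.1) * (w i).1).support = { i | (w i).1 ≠ 0 } := by
    intro w; ext i; simp [hℓ.ne_zero]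
  let F : Nat.Partition n → (ℕ × Σ c : List ℕ+, Fin ((ℓ - 1) ^ c.length)) → WC.P :=
    fun p i => Φ ⟨n, p⟩ (e i)
  have hF : Function.Injective F := by
    intro p q h
    have h1 : Φ ⟨n, p⟩ = Φ ⟨n, q⟩ := by
      funext t
      have := congrFun h (e.symm t)
      simpa [F] using this
    have := hinj h1
    simpa using this
  have hset : { w : (ℕ × Σ c : List ℕ+, Fin ((ℓ - 1) ^ c.length)) → Σ m : ℕ, Nat.Partition m |
      (∀ i, IsCore ℓ (w i).2) ∧
      { i | (w i).1 ≠ 0 }.Finite ∧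
      ∑ᶠ i : ℕ × Σ c : List ℕ+, Fin ((ℓ - 1) ^ c.length),
        ℓ ^ (i.1 + csum i.2.1) * (w i).1 = n } = F '' Set.univ := by
    ext w
    rw [Set.image_univ]
    constructor
    · rintro ⟨h1, h2, h3⟩
      have h4 : WC.T (fun t => w (e.symm t)) = n := by
        rw [hfin]
        simp only [Equiv.symm_apply_apply]
        rw [hsup _ (by rw [hsupp]; exact h2), h3]
      obtain ⟨⟨m, p⟩, hl⟩ := hsurj (fun t => w (e.symm t)) (fun t => h1 _) (by rw [h4]; simp)
      have h5 := hT ⟨m, p⟩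
      rw [hl, h4] at h5
      have h6 : n = m := by exact_mod_cast h5
      subst h6
      refine ⟨p, ?_⟩
      funext i
      simp [F, hl]
    · rintro ⟨p, rfl⟩
      have h5 := hT ⟨n, p⟩
      rw [hfin] at h5
      have h6 : { i | (F p i).1 ≠ 0 }.Finite := by
        have h7 := ENNReal.finite_const_le_of_tsum_ne_top (ε := 1) (by rw [h5]; simp) one_ne_zero
        refine h7.subset ?_
        intro i hi
        have : 1 ≤ ℓ ^ (i.1 + csum i.2.1) * (Φ ⟨n, p⟩ (e i)).1 :=
          Nat.mul_pos (Nat.pos_of_ne_zero (hpos i)) (Nat.pos_of_ne_zero hi)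
        exact_mod_cast this
      refine ⟨fun i => hc _ _, h6, ?_⟩
      have h8 := hsup _ (by rw [hsupp (F p)]; exact h6)
      have h9 := h8.symm.trans h5
      exact_mod_cast h9
  rw [hset, Set.ncard_image_of_injective _ hF, Set.ncard_univ, Nat.card_eq_fintype_card]
end

section
/- For every natural number n, the number of finitely supported functions f: ℕ × 𝒞 → ℕ such that every value of f is a triangular number and Σ_{(a,𝔠)} 2^{a+|𝔠|} · f(a,𝔠) = n is equal to the number of partitions of n. -/
/-- A natural number is triangular if it is of the form `k * (k + 1) / 2`. -/
def IsTriangular (m : ℕ) : Prop := ∃ k : ℕ, m = k * (k + 1) / 2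

namespace TriPart
open PowerSeries Finset

/-- finite Euler product -/
noncomputable def E (n : ℕ) : ℤ⟦X⟧ := ∏ i ∈ range n, (1 - X ^ (i + 1))
/-- finite distinct product -/
noncomputable def D (n : ℕ) : ℤ⟦X⟧ := ∏ i ∈ range n, (1 + X ^ (i + 1))

lemma E_succ (n : ℕ) : E (n + 1) = E n * (1 - X ^ (n + 1)) := by
  simp [E, prod_range_succ]

/-- q-binomial coefficients -/
noncomputable def G : ℕ → ℕ → ℤ⟦X⟧
  | _, 0 => 1
  | 0, _ + 1 => 0
  | N + 1, k + 1 => G N k + X ^ (k + 1) * G N (k + 1)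

lemma G_zero (N : ℕ) : G N 0 = 1 := by cases N <;> simp [G]

lemma G_lt : ∀ (N k : ℕ), N < k → G N k = 0
  | N, 0, h => by omega
  | 0, k + 1, _ => by simp [G]
  | N + 1, k + 1, h => by
    simp [G, G_lt N k (by omega), G_lt N (k + 1) (by omega)]

lemma G_self : ∀ N : ℕ, G N N = 1
  | 0 => by simp [G]
  | N + 1 => by simp [G, G_self N, G_lt N (N + 1) (by omega)]

lemma G_mul (s : ℕ) : ∀ k l : ℕ, k + l = s → G s k * E k * E l = E s := by
  induction s with
  | zero => intro k l h; obtain ⟨rfl, rfl⟩ : k = 0 ∧ l = 0 := by omega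
            simp [G, E]
  | succ s ih =>
    intro k l h
    rcases k with _ | k
    · obtain rfl : l = s + 1 := by omega
      simp [G, E]
    rcases l with _ | l
    · obtain rfl : k = s := by omega
      rw [G_self]; simp [E]
    have h1 := ih k (l + 1) (by omega)
    have h2 := ih (k + 1) l (by omega)
    obtain rfl : s = k + l + 1 := by omega
    rw [G, E_succ (k + l + 1)]
    have e1 := E_succ k
    have e2 := E_succ l
    rw [add_mul, add_mul]
    have a1 : G (k + l + 1) k * E (k + 1) * E (l + 1) = E (k + l + 1) * (1 - X ^ (k + 1)) := by
      rw [← h1, e1]; ring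
    have a2 : X ^ (k + 1) * G (k + l + 1) (k + 1) * E (k + 1) * E (l + 1)
        = X ^ (k + 1) * E (k + l + 1) * (1 - X ^ (l + 1)) := by
      rw [← h2, e2]; ring
    rw [a1, a2]; ring

lemma rothe (y : ℤ⟦X⟧) (N : ℕ) : ∀ z : ℤ⟦X⟧, ∏ i ∈ range N, (y + z * X ^ i) =
    ∑ k ∈ range (N + 1), X ^ (k.choose 2) * G N k * z ^ k * y ^ (N - k) := by
  induction N with
  | zero => intro z; simp [G]
  | succ N ih =>
    intro z
    rw [prod_range_succ']
    have : ∀ i, y + z * X ^ (i + 1) = y + (z * X) * X ^ i := by intro i; ring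
    simp_rw [this]
    rw [ih, sum_range_succ' _ (N + 1)]
    have h2 : ∀ k ∈ range (N + 1),
        (X : ℤ⟦X⟧) ^ ((k + 1).choose 2) * G (N + 1) (k + 1) * z ^ (k + 1) * y ^ (N + 1 - (k + 1)) =
        X ^ (k.choose 2) * G N k * (z * X) ^ k * y ^ (N - k) * z +
        X ^ ((k + 1).choose 2) * G N (k + 1) * (z * X) ^ (k + 1) * y ^ (N - k) := by
      intro k _
      rw [G, Nat.choose_succ_succ' k 1, Nat.choose_one_right, Nat.add_sub_add_right]
      ring
    rw [sum_congr rfl h2, sum_add_distrib, ← sum_mul]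
    have h3 : ∑ k ∈ range (N + 1), X ^ (k.choose 2) * G N k * (z * X) ^ k * y ^ (N - k) * y =
        ∑ k ∈ range (N + 1),
          X ^ ((k + 1).choose 2) * G N (k + 1) * (z * X) ^ (k + 1) * y ^ (N - k) + y ^ (N + 1) := by
      rw [sum_range_succ', sum_range_succ _ N, G_lt N (N + 1) (by omega)]
      simp only [G_zero]
      have : ∀ k ∈ range N, X ^ ((k + 1).choose 2) * G N (k + 1) * (z * X) ^ (k + 1) * y ^ (N - (k + 1)) * y =
          X ^ ((k + 1).choose 2) * G N (k + 1) * (z * X) ^ (k + 1) * y ^ (N - k) := by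
        intro k hk
        have : N - k = N - (k + 1) + 1 := by have := mem_range.1 hk; omega
        rw [this]; ring
      rw [sum_congr rfl this]
      simp [pow_succ]
    rw [← sum_mul] at h3
    simp only [G_zero]
    simp
    linear_combination h3

lemma prod_low (n : ℕ) : ∏ i ∈ range n, ((X : ℤ⟦X⟧) ^ n + 1 * X ^ i) = X ^ (n.choose 2) * D n := by
  have h : ∀ i ∈ range n, ((X : ℤ⟦X⟧) ^ n + 1 * X ^ i) = X ^ i * (1 + X ^ (n - 1 - i + 1)) := by
    intro i hi
    have := mem_range.1 hi
    have e : n = i + (n - 1 - i + 1) := by omega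
    conv_lhs => rw [e]
    ring
  rw [prod_congr rfl h, prod_mul_distrib, prod_pow_eq_pow_sum, sum_range_id, Nat.choose_two_right,
    prod_range_reflect (fun i => (1 + (X : ℤ⟦X⟧) ^ (i + 1))) n, D]

lemma prod_high (n : ℕ) : ∏ i ∈ range (n + 1), ((X : ℤ⟦X⟧) ^ n + 1 * X ^ (n + i)) =
    2 * X ^ (n * (n + 1)) * D n := by
  have h : ∀ i ∈ range (n + 1), ((X : ℤ⟦X⟧) ^ n + 1 * X ^ (n + i)) = X ^ n * (1 + X ^ i) := by
    intro i _; ring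
  rw [prod_congr rfl h, prod_mul_distrib, prod_const, card_range, prod_range_succ', D, ← pow_mul]
  ring

lemma G_symm (n j : ℕ) (h : j ≤ n) : G (2 * n + 1) (n + 1 + j) = G (2 * n + 1) (n - j) := by
  have h1 := G_mul (2 * n + 1) (n + 1 + j) (n - j) (by omega)
  have h2 := G_mul (2 * n + 1) (n - j) (n + 1 + j) (by omega)
  have hE : ∀ k, E k ≠ 0 := by
    intro k hk
    have := congrArg (constantCoeff (R := ℤ)) hk
    simp [E] at this
  have : (G (2 * n + 1) (n + 1 + j) - G (2 * n + 1) (n - j)) * (E (n - j) * E (n + 1 + j)) = 0 := by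
    linear_combination h1 - h2
  rcases mul_eq_zero.1 this with h | h
  · linear_combination h
  · exact absurd h (mul_ne_zero (hE _) (hE _))

lemma choose_two_tri (j : ℕ) : (j + 1).choose 2 = j * (j + 1) / 2 := by
  rw [Nat.choose_two_right]; simp [mul_comm]

lemma choose_two_mul (j : ℕ) : 2 * ((j + 1).choose 2 : ℤ) = j * (j + 1) := by
  induction j with
  | zero => simp
  | succ j ih =>
    rw [Nat.choose_succ_succ' (j + 1) 1, Nat.choose_one_right]
    push_cast; linarith

lemma choose_two_mul' (j : ℕ) : 2 * (j.choose 2 : ℤ) = j * (j - 1) := by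
  cases j with
  | zero => simp
  | succ j => rw [choose_two_mul]; push_cast; ring

lemma finite_gauss (n : ℕ) :
    ∑ j ∈ range (n + 1), (X : ℤ⟦X⟧) ^ (j * (j + 1) / 2) * G (2 * n + 1) (n - j) = D n ^ 2 := by
  have h := rothe (X ^ n) (n + (n + 1)) 1
  rw [prod_range_add, prod_low, prod_high, show n + (n + 1) + 1 = (n + 1) + (n + 1) by ring,
    sum_range_add, ← sum_range_reflect _ (n + 1)] at h
  have e1 : ∀ j ∈ range (n + 1),
      (X : ℤ⟦X⟧) ^ ((n + 1 - 1 - j).choose 2) * G (n + (n + 1)) (n + 1 - 1 - j) *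
        1 ^ (n + 1 - 1 - j) * (X ^ n) ^ (n + (n + 1) - (n + 1 - 1 - j)) =
      X ^ (n.choose 2 + n * (n + 1)) * (X ^ (j * (j + 1) / 2) * G (2 * n + 1) (n - j)) := by
    intro j hj
    obtain ⟨m, rfl⟩ := Nat.exists_eq_add_of_le (Nat.le_of_lt_succ (mem_range.1 hj))
    have a1 : j + m + 1 - 1 - j = m := by omega
    have a2 : j + m - j = m := by omega
    have a3 : j + m + (j + m + 1) - m = 2 * j + m + 1 := by omega
    rw [a1, a2, a3, show j + m + (j + m + 1) = 2 * (j + m) + 1 by ring, ← choose_two_tri]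
    have : m.choose 2 + (j + m) * (2 * j + m + 1) =
        (j + m).choose 2 + (j + m) * (j + m + 1) + (j + 1).choose 2 := by
      have b1 := choose_two_mul' m
      have b2 := choose_two_mul' (j + m)
      have b3 := choose_two_mul j
      zify
      push_cast at *
      linarith
    rw [one_pow, ← pow_mul, mul_one, ← mul_assoc, ← pow_add, ← this]
    ring
  have e2 : ∀ j ∈ range (n + 1),
      (X : ℤ⟦X⟧) ^ ((n + 1 + j).choose 2) * G (n + (n + 1)) (n + 1 + j) *
        1 ^ (n + 1 + j) * (X ^ n) ^ (n + (n + 1) - (n + 1 + j)) =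
      X ^ (n.choose 2 + n * (n + 1)) * (X ^ (j * (j + 1) / 2) * G (2 * n + 1) (n - j)) := by
    intro j hj
    have hj' := Nat.le_of_lt_succ (mem_range.1 hj)
    rw [show n + (n + 1) = 2 * n + 1 by ring, G_symm n j hj']
    obtain ⟨m, rfl⟩ := Nat.exists_eq_add_of_le hj'
    have a2 : j + m - j = m := by omega
    have a3 : 2 * (j + m) + 1 - (j + m + 1 + j) = m := by omega
    rw [a2, a3, ← choose_two_tri]
    have : (j + m + 1 + j).choose 2 + (j + m) * m =
        (j + m).choose 2 + (j + m) * (j + m + 1) + (j + 1).choose 2 := by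
      have b1 := choose_two_mul' (j + m + 1 + j)
      have b2 := choose_two_mul' (j + m)
      have b3 := choose_two_mul j
      zify
      push_cast at *
      linarith
    rw [one_pow, ← pow_mul, mul_one, ← mul_assoc, ← pow_add, ← this]
    ring
  rw [sum_congr rfl e1, sum_congr rfl e2, ← mul_sum] at h
  have hne : (2 * X ^ (n.choose 2 + n * (n + 1)) : ℤ⟦X⟧) ≠ 0 := by
    refine mul_ne_zero ?_ (pow_ne_zero _ X_ne_zero)
    intro h
    have := congrArg (constantCoeff (R := ℤ)) h
    rw [map_ofNat, map_zero] at this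
    norm_num at this
  apply mul_left_cancel₀ hne
  rw [pow_add] at *
  linear_combination -h

open scoped Classical in
/-- generating function of triangular numbers -/
noncomputable def psi : ℤ⟦X⟧ := PowerSeries.mk fun n => if IsTriangular n then 1 else 0

/-- generating function of partitions -/
noncomputable def P : ℤ⟦X⟧ := PowerSeries.mk fun n => (Fintype.card (Nat.Partition n) : ℤ)

/-- the truncation map -/
noncomputable abbrev pi (d : ℕ) : ℤ⟦X⟧ →+* ℤ⟦X⟧ ⧸ (Ideal.span {(X : ℤ⟦X⟧) ^ d}) :=
  Ideal.Quotient.mk _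

lemma pi_eq {d : ℕ} {a b : ℤ⟦X⟧} : pi d a = pi d b ↔ ∀ m < d, coeff m a = coeff m b := by
  rw [pi, Ideal.Quotient.eq, Ideal.mem_span_singleton, X_pow_dvd_iff]
  simp [sub_eq_zero]

lemma pi_X_pow {d k : ℕ} (h : d ≤ k) : pi d (X ^ k) = 0 := by
  rw [pi, Ideal.Quotient.eq_zero_iff_mem, Ideal.mem_span_singleton]
  exact pow_dvd_pow _ h

lemma choose_inj {i j : ℕ} (h : i * (i + 1) / 2 = j * (j + 1) / 2) : i = j := by
  rw [← choose_two_tri, ← choose_two_tri] at h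
  have b1 := choose_two_mul i
  have b2 := choose_two_mul j
  rw [h, b2] at b1
  zify
  nlinarith

lemma le_tri (k : ℕ) : k ≤ k * (k + 1) / 2 := by
  rw [Nat.le_div_iff_mul_le (by norm_num)]
  rcases k with _ | k
  · simp
  · nlinarith

lemma pi_psi {d n : ℕ} (h : d ≤ n) :
    pi d psi = pi d (∑ j ∈ range n, X ^ (j * (j + 1) / 2)) := by
  rw [pi_eq]
  intro m hm
  rw [psi, coeff_mk, map_sum]
  simp only [coeff_X_pow]
  split_ifs with ht
  · obtain ⟨k, rfl⟩ := ht
    rw [sum_eq_single k]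
    · simp
    · intro b _ hb
      rw [if_neg]
      intro h
      exact hb (choose_inj h).symm
    · intro hk
      exact absurd (mem_range.2 (lt_of_le_of_lt (le_tri k) (by omega))) hk
  · symm
    apply sum_eq_zero
    intro j _
    rw [if_neg]
    intro h
    exact ht ⟨j, h⟩

open scoped PowerSeries.WithPiTopology in
lemma pi_P {d n : ℕ} (h : d ≤ n) : pi d P * pi d (E n) = 1 := by
  let _ : TopologicalSpace ℤ := ⊥
  have _ : DiscreteTopology ℤ := ⟨rfl⟩
  have hp := Nat.Partition.hasProd_powerSeriesMk_card_restricted ℤ (fun _ => True)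
  have hP : (PowerSeries.mk fun n ↦ (#(Nat.Partition.restricted n (fun _ => True)) : ℤ)) = P := by
    ext n
    simp [P, Nat.Partition.restricted]
  rw [hP] at hp
  simp only [if_true] at hp
  set f : ℕ → ℤ⟦X⟧ := fun i => ∑' j : ℕ, X ^ ((i + 1) * j) with hf
  have hf1 : ∀ i, f i * (1 - X ^ (i + 1)) = 1 := by
    intro i
    simp only [hf, pow_mul]
    exact WithPiTopology.tsum_pow_mul_one_sub_of_constantCoeff_eq_zero (by simp)
  have hf2 : ∀ i, d ≤ i → pi d (f i) = 1 := by
    intro i hi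
    have := congrArg (pi d) (hf1 i)
    rw [map_mul, map_sub, pi_X_pow (by omega), map_one] at this
    simpa using this
  have key : pi d P = pi d (∏ i ∈ range n, f i) := by
    rw [HasProd, WithPiTopology.tendsto_iff_coeff_tendsto] at hp
    have hev : ∀ m, ∀ᶠ s in Filter.atTop, coeff m (∏ i ∈ s, f i) = coeff m P := by
      intro m
      have := hp m
      rw [nhds_discrete, Filter.tendsto_pure] at this
      exact this
    have hall : ∀ᶠ s in Filter.atTop, ∀ m ∈ range d, coeff m (∏ i ∈ s, f i) = coeff m P := by
      rw [Filter.eventually_all_finset]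
      intro m _; exact hev m
    obtain ⟨s, hs, hs'⟩ := (hall.and (Filter.eventually_ge_atTop (range n))).exists
    have h1 : pi d P = pi d (∏ i ∈ s, f i) :=
      pi_eq.2 fun m hm => (hs m (mem_range.2 hm)).symm
    rw [h1, ← prod_sdiff hs', map_mul, map_prod, prod_eq_one, one_mul]
    intro i hi
    apply hf2
    simp at hi
    omega
  rw [key, ← map_mul, E, ← prod_mul_distrib, prod_congr rfl (fun i _ => hf1 i)]
  simp

lemma pi_gauss (d : ℕ) : pi d psi * pi d P = pi d (D (2 * d)) ^ 2 := by
  rw [pi_psi (d := d) (n := 2 * d + 1) (by omega), ← map_pow, ← finite_gauss, map_sum, map_sum,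
    sum_mul]
  apply sum_congr rfl
  intro j _
  rw [map_mul]
  by_cases hj : d ≤ j
  · rw [pi_X_pow (hj.trans (le_tri j))]; simp
  · congr 1
    have h := congrArg (pi d) (G_mul (2 * (2 * d) + 1) (2 * d - j) (2 * d + 1 + j) (by omega))
    rw [map_mul, map_mul] at h
    have h1 := pi_P (d := d) (n := 2 * d - j) (by omega)
    have h2 := pi_P (d := d) (n := 2 * d + 1 + j) (by omega)
    have h3 := pi_P (d := d) (n := 2 * (2 * d) + 1) (by omega)
    have h4 : pi d (E (2 * (2 * d) + 1)) * (pi d P * pi d P) =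
       pi d (G (2 * (2 * d) + 1) (2 * d - j)) := by
      rw [← h]
      linear_combination (pi d (G (2 * (2 * d) + 1) (2 * d - j))) * ((pi d P * pi d (E (2 * d + 1 + j))) * h1 + h2)
    rw [← h4]
    linear_combination - pi d P * h3

/-- substitution of a power of the variable -/
noncomputable abbrev ex (m : ℕ) : ℤ⟦X⟧ →ₐ[ℤ] ℤ⟦X⟧ := expand (2 ^ m) (by positivity)

lemma coeff_ex_eq (m : ℕ) (a b : ℤ⟦X⟧) (n d : ℕ) (hn : n < 2 ^ m * d)
    (h : ∀ k < d, coeff k a = coeff k b) : coeff n (ex m a) = coeff n (ex m b) := by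
  by_cases hd : 2 ^ m ∣ n
  · obtain ⟨k, rfl⟩ := hd
    rw [coeff_expand_mul, coeff_expand_mul]
    exact h k (lt_of_mul_lt_mul_left hn (by positivity))
  · rw [coeff_expand_of_not_dvd _ _ _ hd, coeff_expand_of_not_dvd _ _ _ hd]

lemma ex_E (n : ℕ) : ex 1 (E n) = E n * D n := by
  rw [E, D, map_prod, ← prod_mul_distrib]
  apply prod_congr rfl
  intro i _
  rw [map_sub, map_one, map_pow, expand_X]
  ring

lemma gauss : psi * ex 1 P ^ 2 = P := by
  ext n
  have key : pi (n + 1) (psi * ex 1 P ^ 2) = pi (n + 1) P := by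
    set d := n + 1
    have h1 : pi d (ex 1 P) * pi d (ex 1 (E (2 * d))) = 1 := by
      rw [← map_mul, ← map_mul, ← map_one (pi d), ← map_one (ex 1), pi_eq]
      intro m hm
      apply coeff_ex_eq 1 _ _ m d (by omega)
      rw [← pi_eq, map_mul, map_one]
      exact pi_P (by omega)
    rw [ex_E, map_mul] at h1
    have h2 := pi_gauss d
    have h3 := pi_P (d := d) (n := 2 * d) (by omega)
    rw [map_mul, map_pow]
    generalize pi d (ex 1 P) = p2 at *
    generalize pi d psi = s at *
    generalize pi d P = p at *
    generalize pi d (E (2 * d)) = e at *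
    generalize pi d (D (2 * d)) = D' at *
    have : p2 * D' = p := by linear_combination p * h1 - p2 * D' * h3
    have h5 : s * p2 ^ 2 * p = p * p := by
      linear_combination p2 ^ 2 * h2 + (p2 * D' + p) * this
    linear_combination e * h5 + (p - s * p2 ^ 2) * h3
  exact pi_eq.1 key n (by omega)

lemma ex_comp (m : ℕ) (a : ℤ⟦X⟧) : ex m (ex 1 a) = ex (m + 1) a := by
  have := expand_mul (R := ℤ) (2 ^ m) (by positivity) (2 ^ 1) (by norm_num) a
  simpa [ex, pow_succ] using this.symm

lemma telescope (M : ℕ) :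
    (∏ m ∈ range M, (ex m psi) ^ 2 ^ m) * (ex M P) ^ 2 ^ M = P := by
  induction M with
  | zero => simp [ex]
  | succ M ih =>
    rw [prod_range_succ]
    conv_rhs => rw [← ih, ← gauss, map_mul, map_pow, ex_comp, mul_pow, ← pow_mul, ← pow_succ']
    ring

lemma coeff_main (n M : ℕ) (h : n < 2 ^ M) :
    coeff n (∏ m ∈ range M, (ex m psi) ^ 2 ^ m) = (Fintype.card (Nat.Partition n) : ℤ) := by
  have hP : (Fintype.card (Nat.Partition n) : ℤ) = coeff n P := by simp [P]
  rw [hP]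
  suffices h : pi (n + 1) (∏ m ∈ range M, (ex m psi) ^ 2 ^ m) = pi (n + 1) P from
    pi_eq.1 h n (by omega)
  have h1 : pi (n + 1) (ex M P) = 1 := by
    rw [← map_one (pi _), ← map_one (ex M), pi_eq]
    intro m hm
    apply coeff_ex_eq M _ _ m 1 (by omega)
    intro k hk
    obtain rfl : k = 0 := by omega
    simp [P]
  conv_rhs => rw [← telescope M, map_mul, map_pow, h1, one_pow, mul_one]

/-- weight of an index -/
def wt (i : ℕ × List ℕ+) : ℕ := i.1 + csum i.2

/-- first shift -/
def sL : ℕ × List ℕ+ → ℕ × List ℕ+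
  | (a, []) => (a + 1, [])
  | (a, c :: r) => (a, (c + 1) :: r)

/-- second shift -/
def sR (i : ℕ × List ℕ+) : ℕ × List ℕ+ := (i.1, 1 :: i.2)

lemma sL_inj : Function.Injective sL := by
  rintro ⟨a, _ | ⟨c, r⟩⟩ ⟨b, _ | ⟨e, t⟩⟩ h <;> simp_all [sL]

lemma sR_inj : Function.Injective sR := by
  rintro ⟨a, c⟩ ⟨b, e⟩ h; simp_all [sR]

lemma sL_ne_sR (i j) : sL i ≠ sR j := by
  rcases i with ⟨a, _ | ⟨c, r⟩⟩ <;> rcases j with ⟨b, t⟩ <;> simp [sL, sR]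
  intro _ h
  have h' := congrArg PNat.val h
  simp at h'

lemma wt_sL (i) : wt (sL i) = wt i + 1 := by
  rcases i with ⟨a, _ | ⟨c, r⟩⟩ <;> simp [sL, wt, csum] <;> omega

lemma wt_sR (i) : wt (sR i) = wt i + 1 := by
  rcases i with ⟨a, c⟩
  simp [sR, wt, csum]; omega

lemma wt_zero (i) : wt i = 0 ↔ i = (0, []) := by
  rcases i with ⟨a, _ | ⟨c, r⟩⟩ <;> simp [wt, csum]

lemma exists_shift (i) (h : i ≠ (0, [])) : ∃ j, sL j = i ∨ sR j = i := by
  rcases i with ⟨a, _ | ⟨c, r⟩⟩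
  · rcases a with _ | a
    · exact absurd rfl h
    · exact ⟨(a, []), Or.inl rfl⟩
  · by_cases hc : c = 1
    · exact ⟨(a, r), Or.inr (by simp [sR, hc])⟩
    · obtain ⟨k, rfl⟩ := PNat.exists_eq_succ_of_ne_one hc
      exact ⟨(a, k :: r), Or.inl rfl⟩

/-- the indices of given weight -/
def Lv : ℕ → Finset (ℕ × List ℕ+)
  | 0 => {(0, [])}
  | m + 1 => (Lv m).image sL ∪ (Lv m).image sR

lemma mem_Lv (m : ℕ) : ∀ i, i ∈ Lv m ↔ wt i = m := by
  induction m with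
  | zero => intro i; simp [Lv, wt_zero]
  | succ m ih =>
    intro i
    simp only [Lv, mem_union, mem_image, ih]
    constructor
    · rintro (⟨j, hj, rfl⟩ | ⟨j, hj, rfl⟩)
      · rw [wt_sL, hj]
      · rw [wt_sR, hj]
    · intro h
      have : i ≠ (0, []) := by intro h0; rw [(wt_zero i).2 h0] at h; omega
      obtain ⟨j, rfl | rfl⟩ := exists_shift i this
      · rw [wt_sL] at h; exact Or.inl ⟨j, by omega, rfl⟩
      · rw [wt_sR] at h; exact Or.inr ⟨j, by omega, rfl⟩

lemma card_Lv (m : ℕ) : (Lv m).card = 2 ^ m := by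
  induction m with
  | zero => simp [Lv]
  | succ m ih =>
    rw [Lv, card_union_of_disjoint, card_image_of_injective _ sL_inj,
      card_image_of_injective _ sR_inj, ih]
    · ring
    · rw [disjoint_left]
      intro i hi hj
      obtain ⟨a, _, rfl⟩ := mem_image.1 hi
      obtain ⟨b, _, h⟩ := mem_image.1 hj
      exact sL_ne_sR a b h.symm

/-- the indices of weight less than `M` -/
def IM (M : ℕ) : Finset (ℕ × List ℕ+) := (range M).biUnion Lv

lemma mem_IM (M i) : i ∈ IM M ↔ wt i < M := by
  simp [IM, mem_Lv]

lemma prod_IM (M : ℕ) : ∏ i ∈ IM M, ex (wt i) psi = ∏ m ∈ range M, (ex m psi) ^ 2 ^ m := by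
  rw [IM, prod_biUnion]
  · apply prod_congr rfl
    intro m _
    rw [← card_Lv m, ← prod_const]
    exact prod_congr rfl fun i hi => by rw [(mem_Lv m i).1 hi]
  · intro a _ b _ hab
    rw [Function.onFun, disjoint_left]
    intro i hi hj
    exact hab (((mem_Lv a i).1 hi).symm.trans ((mem_Lv b i).1 hj))

open scoped Classical in
lemma coeff_ex_psi (m k : ℕ) :
    coeff k (ex m psi) = if ∃ t, IsTriangular t ∧ k = 2 ^ m * t then 1 else 0 := by
  by_cases hd : 2 ^ m ∣ k
  · obtain ⟨k, rfl⟩ := hd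
    rw [coeff_expand_mul, psi, coeff_mk]
    congr 1
    simp
  · rw [coeff_expand_of_not_dvd _ _ _ hd, if_neg]
    rintro ⟨t, _, rfl⟩
    exact hd (dvd_mul_right _ _)

/-- the set to be counted -/
def S (n : ℕ) : Set (ℕ × List ℕ+ → ℕ) := { f |
      (∀ i, IsTriangular (f i)) ∧
      (Function.support f).Finite ∧
      ∑ᶠ i : ℕ × List ℕ+, 2 ^ (i.1 + csum i.2) * f i = n }

lemma supp_sub {n M : ℕ} (h : n < 2 ^ M) {f} (hf : f ∈ S n) (i) (hi : i ∉ IM M) : f i = 0 := by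
  obtain ⟨_, h2, h3⟩ := hf
  by_contra hne
  have hs : (Function.support fun i : ℕ × List ℕ+ => 2 ^ (i.1 + csum i.2) * f i).Finite :=
    h2.subset (by intro i; simp)
  have := single_le_finsum i hs (fun _ => Nat.zero_le _)
  rw [h3] at this
  rw [mem_IM, not_lt, wt] at hi
  have h4 : 2 ^ M ≤ 2 ^ (i.1 + csum i.2) := Nat.pow_le_pow_right (by norm_num) hi
  have h5 : 2 ^ (i.1 + csum i.2) * 1 ≤ 2 ^ (i.1 + csum i.2) * f i :=
    Nat.mul_le_mul_left _ (Nat.pos_of_ne_zero hne)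
  omega

lemma finsum_IM {M : ℕ} {f : ℕ × List ℕ+ → ℕ} (h : ∀ i, i ∉ IM M → f i = 0) :
    ∑ᶠ i : ℕ × List ℕ+, 2 ^ (i.1 + csum i.2) * f i = ∑ i ∈ IM M, 2 ^ wt i * f i := by
  rw [finsum_eq_sum_of_support_subset (s := IM M)]
  · rfl
  · intro i hi
    by_contra hc
    apply hi
    simp [h i hc]

open scoped Classical in
lemma ncard_S (n M : ℕ) (h : n < 2 ^ M) :
    ((S n).ncard : ℤ) = coeff n (∏ i ∈ IM M, ex (wt i) psi) := by
  rw [coeff_prod]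
  simp only [coeff_ex_psi, prod_ite_zero, prod_const_one, sum_boole]
  norm_cast
  rw [← Set.ncard_coe_finset]
  have hm : ∀ f (hf : f ∈ S n) i, 2 ^ wt i * f i ≠ 0 → i ∈ IM M := by
    intro f hf i hi
    by_contra hc
    exact hi (by simp [supp_sub h hf i hc])
  apply Set.ncard_congr (fun f hf => Finsupp.onFinset (IM M) (fun i => 2 ^ wt i * f i) (hm f hf))
  · intro f hf
    simp only [coe_filter, Set.mem_ofPred_eq, mem_finsuppAntidiag, Finsupp.onFinset_apply]
    refine ⟨⟨?_, Finsupp.support_onFinset_subset⟩, fun i _ => ⟨f i, hf.1 i, rfl⟩⟩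
    change ∑ i ∈ IM M, 2 ^ wt i * f i = n
    rw [← finsum_IM (supp_sub h hf)]
    exact hf.2.2
  · intro f g hf hg hfg
    funext i
    have := DFunLike.congr_fun hfg i
    simpa using this
  · intro g hg
    simp only [coe_filter, Set.mem_ofPred_eq, mem_finsuppAntidiag] at hg
    obtain ⟨⟨h1, h2⟩, h3⟩ := hg
    choose! t ht ht' using h3
    have hf0 : ∀ i, i ∉ IM M → (if i ∈ IM M then t i else 0) = 0 := fun i hi => if_neg hi
    refine ⟨fun i => if i ∈ IM M then t i else 0, ⟨?_, ?_, ?_⟩, ?_⟩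
    · intro i
      dsimp only
      split_ifs with hi
      · exact ht i hi
      · exact ⟨0, by simp⟩
    · apply (IM M).finite_toSet.subset
      intro i hi
      by_contra hc
      exact hi (hf0 i hc)
    · rw [finsum_IM hf0, ← h1]
      apply sum_congr rfl
      intro i hi
      rw [if_pos hi, ht' i hi]
    · ext i
      simp only [Finsupp.onFinset_apply]
      split_ifs with hi
      · exact (ht' i hi).symm
      · symm
        rw [mul_zero]
        by_contra hc
        exact hi (h2 (Finsupp.mem_support_iff.2 hc))

end TriPart

/-- For every natural number `n`, the number of finitely supported functions
`f : ℕ × 𝒞 → ℕ` all of whose values are triangular numbers and which satisfy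
`∑ 2^{a + |𝔠|} * f (a, 𝔠) = n` equals the number of partitions of `n`. -/
theorem triangular_valued_count_eq_partitions (n : ℕ) :
    Set.ncard { f : ℕ × List ℕ+ → ℕ |
      (∀ i, IsTriangular (f i)) ∧
      (Function.support f).Finite ∧
      ∑ᶠ i : ℕ × List ℕ+, 2 ^ (i.1 + csum i.2) * f i = n } =
    Fintype.card (Nat.Partition n) := by
  have h := TriPart.ncard_S n n Nat.lt_two_pow_self
  rw [TriPart.prod_IM, TriPart.coeff_main n n Nat.lt_two_pow_self] at h
  exact_mod_cast h
end

section
/- Let ℓ be an odd prime and n a natural number. The number of finitely supported functions w which assign to each quadruple (a, x, 𝔠, j) — where a ∈ ℕ, x ∈ {0,1}, 𝔠 ∈ 𝒞 and 1 ≤ j ≤ (ℓ−1)^{t(𝔠)} — an ℓ-core partition w(a, x, 𝔠, j), subject to the condition Σ_{(a,x,𝔠,j)} ℓ^{a+|𝔠|} · |w(a,x,𝔠,j)| = n, is equal to the number of bipartitions of n. (This is the combinatorial content of the weight count for the fusion systems of the compact Lie groups Sp(n) and SO(2n+1) at an odd prime ℓ: the number of weights equals |Irr(W(B_n))|.) 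-/
/-- All partitions, of any size. -/
abbrev AllPart := Σ m : ℕ, Nat.Partition m

/-- The padded parts of a partition, in decreasing order. -/
def hfun (p : AllPart) (i : ℕ) : ℕ := (p.2.parts.sort (· ≥ ·)).getD i 0

lemma getD_antitone (L : List ℕ) (hL : L.Pairwise (· ≥ ·)) : Antitone (fun i => L.getD i 0) := by
  intro i j hij
  simp only
  by_cases hj : j < L.length
  · rcases hij.eq_or_lt with rfl | h
    · exact le_rfl
    · have := List.pairwise_iff_getElem.1 hL i j (by omega) hj h
      rw [List.getD_eq_getElem _ _ hj, List.getD_eq_getElem _ _ (by omega)]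
      exact this
  · rw [List.getD_eq_default _ _ (by omega)]; exact Nat.zero_le _

lemma hfun_antitone (p : AllPart) : Antitone (hfun p) :=
  getD_antitone _ (Multiset.pairwise_sort _ _)

lemma hfun_eq_zero (p : AllPart) {i : ℕ} (h : Multiset.card p.2.parts ≤ i) : hfun p i = 0 := by
  unfold hfun
  rw [List.getD_eq_default]
  simpa using h

lemma parts_padded (p : AllPart) (N : ℕ) (h : Multiset.card p.2.parts ≤ N) :
    (Multiset.range N).map (hfun p) =
      p.2.parts + Multiset.replicate (N - Multiset.card p.2.parts) 0 := by
  set L := p.2.parts.sort (· ≥ ·) with hL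
  have hlen : L.length = Multiset.card p.2.parts := by simp [hL]
  have h1 : (List.range N).map (hfun p) = L ++ List.replicate (N - L.length) 0 := by
    apply List.ext_getElem
    · simp; omega
    · intro i h1 h2
      simp only [List.getElem_map, List.getElem_range, hfun, ← hL]
      by_cases hi : i < L.length
      · rw [List.getElem_append_left hi, List.getD_eq_getElem _ _ hi]
      · rw [List.getElem_append_right (by omega), List.getD_eq_default _ _ (by omega)]
        simp
  have h2 : (L : Multiset ℕ) = p.2.parts := Multiset.sort_eq _ _
  rw [← hlen, ← h2, ← Multiset.coe_replicate, Multiset.coe_add, ← h1]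
  rfl

lemma sum_hfun (p : AllPart) (N : ℕ) (h : Multiset.card p.2.parts ≤ N) :
    ∑ i ∈ Finset.range N, hfun p i = p.1 := by
  have := congrArg Multiset.sum (parts_padded p N h)
  simp only [Multiset.sum_add, Multiset.sum_replicate, smul_zero, add_zero, p.2.parts_sum] at this
  exact this

lemma parts_filter (p : AllPart) (N : ℕ) (h : Multiset.card p.2.parts ≤ N) :
    ((Multiset.range N).map (hfun p)).filter (0 < ·) = p.2.parts := by
  rw [parts_padded p N h, Multiset.filter_add, Multiset.filter_eq_self.2, Multiset.filter_eq_nil.2]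
  · simp
  · intro a ha; rw [Multiset.eq_of_mem_replicate ha]; simp
  · intro a ha; exact p.2.parts_pos ha

lemma allPart_ext {p q : AllPart} (h : p.2.parts = q.2.parts) : p = q := by
  obtain ⟨m, p⟩ := p
  obtain ⟨k, q⟩ := q
  simp only at h
  have : m = k := by rw [← p.parts_sum, ← q.parts_sum, h]
  subst this
  congr
  exact Nat.Partition.ext h

lemma card_parts_le (p : AllPart) : Multiset.card p.2.parts ≤ p.1 := by
  have := Multiset.card_nsmul_le_sum (s := p.2.parts) (a := 1) (fun x hx => p.2.parts_pos hx)
  simpa [p.2.parts_sum] using this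

/-- the bead position function -/
lemma bead_strictAnti (p : AllPart) (N : ℕ) :
    StrictAnti (fun i : Fin N => hfun p i + (N - 1 - (i : ℕ))) := by
  intro i j hij
  have h1 := hfun_antitone p (le_of_lt (show (i : ℕ) < j from hij))
  have h2 : (i : ℕ) < j := hij
  have := i.2
  have := j.2
  simp only
  omega

lemma bead_injOn (p : AllPart) (N : ℕ) :
    Set.InjOn (fun i : ℕ => hfun p i + (N - 1 - i)) (Finset.range N : Finset ℕ) := by
  intro i hi j hj hij
  have hi : i < N := by simpa using hi
  have hj : j < N := by simpa using hj
  have := (bead_strictAnti p N).injective (a₁ := ⟨i, hi⟩) (a₂ := ⟨j, hj⟩) hij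
  simpa using this

lemma betaSet_eq (p : AllPart) (N : ℕ) : betaSet p.2 N =
    (Finset.range N).image (fun i : ℕ => hfun p i + (N - 1 - i)) := rfl

lemma card_betaSet (p : AllPart) (N : ℕ) : (betaSet p.2 N).card = N := by
  rw [betaSet_eq, Finset.card_image_of_injOn (bead_injOn p N), Finset.card_range]

lemma sum_betaSet (p : AllPart) (N : ℕ) (h : Multiset.card p.2.parts ≤ N) :
    ∑ b ∈ betaSet p.2 N, b = p.1 + ∑ i ∈ Finset.range N, i := by
  rw [betaSet_eq, Finset.sum_image (bead_injOn p N), Finset.sum_add_distrib, sum_hfun p N h,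
    Finset.sum_range_reflect (fun i => i)]

lemma betaSet_inj (p q : AllPart) (N : ℕ) (hp : Multiset.card p.2.parts ≤ N)
    (hq : Multiset.card q.2.parts ≤ N) (h : betaSet p.2 N = betaSet q.2 N) : p = q := by
  have key : (fun i : Fin N => hfun p i + (N - 1 - (i : ℕ))) =
      (fun i : Fin N => hfun q i + (N - 1 - (i : ℕ))) := by
    apply Set.range_injOn_strictAnti (bead_strictAnti p N) (bead_strictAnti q N)
    have e : ∀ r : AllPart, Set.range (fun i : Fin N => hfun r i + (N - 1 - (i : ℕ))) =
        (betaSet r.2 N : Set ℕ) := by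
      intro r
      ext x
      simp only [betaSet_eq, Finset.coe_image, Set.mem_range, Set.mem_image, Finset.mem_coe,
        Finset.mem_range]
      constructor
      · rintro ⟨i, rfl⟩; exact ⟨i, i.2, rfl⟩
      · rintro ⟨i, hi, rfl⟩; exact ⟨⟨i, hi⟩, rfl⟩
    rw [e, e, h]
  apply allPart_ext
  rw [← parts_filter p N hp, ← parts_filter q N hq]
  congr 1
  apply Multiset.map_congr rfl
  intro i hi
  have hi : i < N := by simpa using hi
  have := congrFun key ⟨i, hi⟩
  simpa using this

lemma exists_unshift (S : List ℕ) (hS : S.Pairwise (· > ·)) :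
    ∃ L : List ℕ, L.length = S.length ∧ L.Pairwise (· ≥ ·) ∧
      ∀ i < S.length, S.getD i 0 = L.getD i 0 + (S.length - 1 - i) := by
  induction S with
  | nil => exact ⟨[], by simp⟩
  | cons a S ih =>
    obtain ⟨L, h1, h2, h3⟩ := ih (List.pairwise_cons.1 hS).2
    have ha := (List.pairwise_cons.1 hS).1
    have hmax : ∀ b ∈ L, b + S.length ≤ a := by
      intro b hb
      obtain ⟨i, hi, rfl⟩ := List.getElem_of_mem hb
      have h0 : 0 < S.length := by omega
      have e := h3 0 h0
      have e2 := getD_antitone L h2 (Nat.zero_le i)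
      simp only at e2
      rw [List.getD_eq_getElem L 0 hi] at e2
      have := ha (S.getD 0 0) (by rw [List.getD_eq_getElem _ _ h0]; exact List.getElem_mem _)
      omega
    have haS : S.length ≤ a := by
      rcases Nat.eq_zero_or_pos S.length with h0 | h0
      · omega
      · have := hmax (L[0]'(by omega)) (List.getElem_mem _)
        omega
    refine ⟨(a - S.length) :: L, by simp [h1], ?_, ?_⟩
    · rw [List.pairwise_cons]
      refine ⟨fun b hb => ?_, h2⟩
      have := hmax b hb
      show b ≤ a - S.length
      omega
    · intro i hi
      cases i with
      | zero => simp; omega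
      | succ i =>
        simp only [List.length_cons] at hi
        simp only [List.getD_cons_succ, List.length_cons]
        rw [h3 i (by omega)]
        omega

lemma getD_filter_pos (L : List ℕ) (hL : L.Pairwise (· ≥ ·)) (i : ℕ) :
    (L.filter (fun x => 0 < x)).getD i 0 = L.getD i 0 := by
  induction L generalizing i with
  | nil => simp
  | cons a L ih =>
    obtain ⟨h1, h2⟩ := List.pairwise_cons.1 hL
    by_cases ha : 0 < a
    · rw [List.filter_cons_of_pos (by simpa using ha)]
      cases i with
      | zero => simp
      | succ i => simpa using ih h2 i
    · have ha0 : a = 0 := by omega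
      subst ha0
      have hz : ∀ x ∈ (0 :: L), x = 0 := by
        intro x hx
        rcases List.mem_cons.1 hx with h | h
        · exact h
        · have := h1 x h
          omega
      rw [List.filter_eq_nil_iff.2 (by intro x hx; simp [hz x hx])]
      by_cases hi : i < (0 :: L).length
      · rw [List.getD_eq_getElem _ _ hi, hz _ (List.getElem_mem _)]; simp
      · rw [List.getD_eq_default (0 :: L) _ (by omega)]; simp

lemma betaSet_surj (B : Finset ℕ) :
    ∃ p : AllPart, Multiset.card p.2.parts ≤ B.card ∧ betaSet p.2 B.card = B := by
  obtain ⟨L, h1, h2, h3⟩ := exists_unshift (B.sort (· ≥ ·)) (Finset.sortedGT_sort B).pairwise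
  simp only [Finset.length_sort] at h1 h3
  set F := L.filter (fun x => 0 < x) with hF
  let p : AllPart := ⟨F.sum, ⟨(F : Multiset ℕ), by
    intro i hi
    have : i ∈ F := hi
    simpa using (List.mem_filter.1 this).2, by simp⟩⟩
  have hsort : p.2.parts.sort (· ≥ ·) = F := by
    apply List.Perm.eq_of_pairwise' (Multiset.pairwise_sort _ _) (h2.filter _)
    rw [← Multiset.coe_eq_coe, Multiset.sort_eq]
  refine ⟨p, ?_, ?_⟩
  · show F.length ≤ _
    rw [← h1]; exact List.length_filter_le _ _
  · have hb : ∀ i < B.card, hfun p i + (B.card - 1 - i) = (B.sort (· ≥ ·)).getD i 0 := by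
      intro i hi
      rw [h3 i hi, hfun, hsort, hF, getD_filter_pos L h2]
    apply Finset.eq_of_subset_of_card_le
    · intro x hx
      rw [betaSet_eq, Finset.mem_image] at hx
      obtain ⟨i, hi, rfl⟩ := hx
      have hi : i < B.card := by simpa using hi
      rw [hb i hi, List.getD_eq_getElem _ _ (by simpa using hi),
        ← Finset.mem_sort (s := B) (r := (· ≥ ·))]
      exact List.getElem_mem _
    · rw [card_betaSet]

lemma betaSet_succ (p : AllPart) (N : ℕ) (h : Multiset.card p.2.parts ≤ N) (x : ℕ) :
    x ∈ betaSet p.2 (N + 1) ↔ x = 0 ∨ ∃ y ∈ betaSet p.2 N, x = y + 1 := by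
  simp only [betaSet_eq, Finset.mem_image, Finset.mem_range]
  constructor
  · rintro ⟨i, hi, rfl⟩
    rcases (Nat.lt_succ_iff.1 hi).eq_or_lt with rfl | hlt
    · left; rw [hfun_eq_zero p h]; omega
    · right; exact ⟨_, ⟨i, hlt, rfl⟩, by omega⟩
  · rintro (rfl | ⟨_, ⟨i, hi, rfl⟩, rfl⟩)
    · exact ⟨N, by omega, by rw [hfun_eq_zero p h]; omega⟩
    · exact ⟨i, by omega, by omega⟩

/-- closed under removing `ℓ` -/
def Closed (ℓ : ℕ) (B : Finset ℕ) : Prop := ∀ b ∈ B, ℓ ≤ b → b - ℓ ∈ B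

lemma closed_succ (ℓ : ℕ) (p : AllPart) (N : ℕ) (h : Multiset.card p.2.parts ≤ N) :
    Closed ℓ (betaSet p.2 (N + 1)) ↔ Closed ℓ (betaSet p.2 N) := by
  constructor
  · intro H b hb hl
    have := H (b + 1) ((betaSet_succ p N h _).2 (Or.inr ⟨b, hb, rfl⟩)) (by omega)
    rcases (betaSet_succ p N h _).1 this with h0 | ⟨y, hy, e⟩
    · omega
    · have : b - ℓ = y := by omega
      rwa [this]
  · intro H b hb hl
    rw [betaSet_succ p N h] at hb ⊢
    rcases hb with rfl | ⟨y, hy, rfl⟩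
    · left; omega
    · rcases hl.eq_or_lt with h0 | h0
      · left; omega
      · right; exact ⟨y - ℓ, H y hy (by omega), by omega⟩

lemma isCore_iff (ℓ : ℕ) (p : AllPart) (N : ℕ) (h : Multiset.card p.2.parts ≤ N) :
    IsCore ℓ p.2 ↔ Closed ℓ (betaSet p.2 N) := by
  have base : ∀ k, Closed ℓ (betaSet p.2 (Multiset.card p.2.parts + k)) ↔
      Closed ℓ (betaSet p.2 (Multiset.card p.2.parts)) := by
    intro k
    induction k with
    | zero => rfl
    | succ k ih => rw [← ih, ← closed_succ ℓ p _ (Nat.le_add_right _ k)]; rfl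
  have base' : ∀ M, Multiset.card p.2.parts ≤ M → (Closed ℓ (betaSet p.2 M) ↔
      Closed ℓ (betaSet p.2 (Multiset.card p.2.parts))) := by
    intro M hM
    obtain ⟨k, rfl⟩ := Nat.exists_eq_add_of_le hM
    exact base k
  constructor
  · intro H; exact H N h
  · intro H M hM
    exact (base' M hM).2 ((base' N h).1 H)

lemma range_subset_betaSet (p : AllPart) (N n : ℕ) (hn : p.1 ≤ n) :
    Finset.range (N - n) ⊆ betaSet p.2 N := by
  intro x hx
  have hx : x < N - n := by simpa using hx
  rw [betaSet_eq, Finset.mem_image]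
  refine ⟨N - 1 - x, by simp; omega, ?_⟩
  rw [hfun_eq_zero p (by have := card_parts_le p; omega)]
  omega

/-- The `ℓ`-core partitions. -/
abbrev CorePart (ℓ : ℕ) := {p : AllPart // IsCore ℓ p.2}

/-- assemble an `ℓ`-runner abacus -/
def abJoin (ℓ : ℕ) (C : Fin ℓ → Finset ℕ) : Finset ℕ :=
  (Finset.univ.sigma C).image (fun x => x.2 * ℓ + (x.1 : ℕ))

/-- the runners of an abacus -/
def abSplit (ℓ : ℕ) (B : Finset ℕ) (r : Fin ℓ) : Finset ℕ :=
  (B.filter (fun b => b % ℓ = r)).image (fun b => b / ℓ)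

lemma ab_inj (ℓ : ℕ) {b c : ℕ} {r s : Fin ℓ} (h : b * ℓ + (r : ℕ) = c * ℓ + (s : ℕ)) :
    b = c ∧ r = s := by
  have h1 := congrArg (· / ℓ) h
  have h2 := congrArg (· % ℓ) h
  have hl : 0 < ℓ := r.pos
  simp only [Nat.mul_add_mod_of_lt r.2, Nat.mul_add_mod_of_lt s.2] at h2
  have e1 : (b * ℓ + (r : ℕ)) / ℓ = b := by
    rw [mul_comm, Nat.mul_add_div hl, Nat.div_eq_of_lt r.2, add_zero]
  have e2 : (c * ℓ + (s : ℕ)) / ℓ = c := by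
    rw [mul_comm, Nat.mul_add_div hl, Nat.div_eq_of_lt s.2, add_zero]
  simp only [e1, e2] at h1
  exact ⟨h1, Fin.ext h2⟩

lemma mem_abJoin {ℓ : ℕ} {C : Fin ℓ → Finset ℕ} {b : ℕ} {r : Fin ℓ} :
    b * ℓ + (r : ℕ) ∈ abJoin ℓ C ↔ b ∈ C r := by
  unfold abJoin
  simp only [Finset.mem_image, Finset.mem_sigma, Finset.mem_univ, true_and, Sigma.exists]
  constructor
  · rintro ⟨s, c, hc, h⟩
    obtain ⟨rfl, rfl⟩ := ab_inj ℓ h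
    exact hc
  · intro h; exact ⟨r, b, h, rfl⟩

lemma mem_abSplit {ℓ : ℕ} {B : Finset ℕ} {b : ℕ} {r : Fin ℓ} :
    b ∈ abSplit ℓ B r ↔ b * ℓ + (r : ℕ) ∈ B := by
  unfold abSplit
  simp only [Finset.mem_image, Finset.mem_filter]
  constructor
  · rintro ⟨c, ⟨hc, h1⟩, rfl⟩
    rw [← h1, Nat.div_add_mod']
    exact hc
  · intro h
    refine ⟨_, ⟨h, Nat.mul_add_mod_of_lt r.2⟩, ?_⟩
    rw [mul_comm, Nat.mul_add_div r.pos, Nat.div_eq_of_lt r.2, add_zero]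

lemma split_join (ℓ : ℕ) (C : Fin ℓ → Finset ℕ) (r : Fin ℓ) : abSplit ℓ (abJoin ℓ C) r = C r := by
  ext b; rw [mem_abSplit, mem_abJoin]

lemma join_split (ℓ : ℕ) (hl : 0 < ℓ) (B : Finset ℕ) : abJoin ℓ (abSplit ℓ B) = B := by
  ext x
  have : x = x / ℓ * ℓ + ((⟨x % ℓ, Nat.mod_lt _ hl⟩ : Fin ℓ) : ℕ) := (Nat.div_add_mod' _ _).symm
  rw [this, mem_abJoin, mem_abSplit]

lemma ab_injOn (ℓ : ℕ) (s : Set (Σ _ : Fin ℓ, ℕ)) :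
    Set.InjOn (fun x : (Σ _ : Fin ℓ, ℕ) => x.2 * ℓ + (x.1 : ℕ)) s := by
  rintro ⟨r, b⟩ _ ⟨s, c⟩ _ h
  obtain ⟨rfl, rfl⟩ := ab_inj ℓ h
  rfl

lemma card_abJoin (ℓ : ℕ) (C : Fin ℓ → Finset ℕ) : (abJoin ℓ C).card = ∑ r, (C r).card := by
  unfold abJoin
  rw [Finset.card_image_of_injOn (ab_injOn ℓ _), Finset.card_sigma]

lemma sum_abJoin (ℓ : ℕ) (C : Fin ℓ → Finset ℕ) :
    ∑ x ∈ abJoin ℓ C, x = ∑ r : Fin ℓ, ((∑ b ∈ C r, b) * ℓ + (C r).card * (r : ℕ)) := by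
  unfold abJoin
  rw [Finset.sum_image (ab_injOn ℓ _), Finset.sum_sigma]
  refine Finset.sum_congr rfl fun r _ => ?_
  simp only [Finset.sum_add_distrib, Finset.sum_mul, Finset.sum_const, smul_eq_mul]

lemma eq_range_of_lower (S : Finset ℕ) (h : ∀ b, b + 1 ∈ S → b ∈ S) :
    S = Finset.range S.card := by
  apply Finset.eq_of_subset_of_card_le
  · intro b hb
    have key : ∀ k ≤ b, b - k ∈ S := by
      intro k
      induction k with
      | zero => intro _; simpa using hb
      | succ k ih =>
        intro hk
        apply h
        have : b - (k + 1) + 1 = b - k := by omega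
        rw [this]; exact ih (by omega)
    have hsub : Finset.range (b + 1) ⊆ S := by
      intro x hx
      have hx : x < b + 1 := by simpa using hx
      have := key (b - x) (by omega)
      rwa [show b - (b - x) = x by omega] at this
    have := Finset.card_le_card hsub
    rw [Finset.card_range] at this
    rw [Finset.mem_range]; omega
  · simp

lemma closed_split {ℓ : ℕ} {B : Finset ℕ} (h : Closed ℓ B) (r : Fin ℓ) :
    abSplit ℓ B r = Finset.range (abSplit ℓ B r).card := by
  apply eq_range_of_lower
  intro b hb
  rw [mem_abSplit] at hb ⊢
  have := h _ hb (by nlinarith)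
  have e : (b + 1) * ℓ + (r : ℕ) - ℓ = b * ℓ + r := by
    rw [Nat.succ_mul]; omega
  rwa [e] at this

lemma closed_join_range {ℓ : ℕ} (hl : 0 < ℓ) (k : Fin ℓ → ℕ) :
    Closed ℓ (abJoin ℓ (fun r => Finset.range (k r))) := by
  intro x hx hlx
  have e : x = x / ℓ * ℓ + ((⟨x % ℓ, Nat.mod_lt _ hl⟩ : Fin ℓ) : ℕ) := (Nat.div_add_mod' _ _).symm
  have e2 : x - ℓ = (x / ℓ - 1) * ℓ + ((⟨x % ℓ, Nat.mod_lt _ hl⟩ : Fin ℓ) : ℕ) := by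
    have : 1 ≤ x / ℓ := (Nat.one_le_div_iff hl).2 hlx
    have h3 := Nat.mul_le_mul_right ℓ this
    rw [Nat.sub_mul]
    conv_lhs => rw [e]
    omega
  rw [e, mem_abJoin] at hx
  rw [e2, mem_abJoin]
  simp only [Finset.mem_range] at hx ⊢
  exact lt_of_le_of_lt (Nat.sub_le _ _) hx

/-- beta-sets of partitions of `n` with `N` beads -/
abbrev Beads (N n : ℕ) := {B : Finset ℕ // B.card = N ∧ ∑ b ∈ B, b = n + ∑ i ∈ Finset.range N, i}

lemma card_beads (N n : ℕ) (h : n ≤ N) :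
    Nat.card {p : AllPart // p.1 = n} = Nat.card (Beads N n) := by
  have hc : ∀ p : {p : AllPart // p.1 = n}, Multiset.card p.1.2.parts ≤ N := fun p =>
    (card_parts_le p.1).trans (p.2.le.trans h)
  apply Nat.card_eq_of_bijective
    (fun p => (⟨betaSet p.1.2 N, card_betaSet _ _, by rw [sum_betaSet _ _ (hc p), p.2]⟩ : Beads N n))
  constructor
  · intro p q hpq
    apply Subtype.ext
    exact betaSet_inj _ _ N (hc p) (hc q) (congrArg Subtype.val hpq)
  · rintro ⟨B, h1, h2⟩
    obtain ⟨p, hp1, hp2⟩ := betaSet_surj B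
    rw [h1] at hp1 hp2
    refine ⟨⟨p, ?_⟩, Subtype.ext hp2⟩
    have := sum_betaSet p N hp1
    rw [hp2, h2] at this
    omega

lemma runner_card (ℓ n : ℕ) (p : AllPart) (hp : p.1 ≤ n) (r : Fin ℓ) :
    n ≤ (abSplit ℓ (betaSet p.2 (ℓ * (2 * n))) r).card := by
  have : Finset.range n ⊆ abSplit ℓ (betaSet p.2 (ℓ * (2 * n))) r := by
    intro b hb
    rw [mem_abSplit]
    apply range_subset_betaSet p _ n hp
    have hb : b < n := by simpa using hb
    rw [Finset.mem_range]
    have hr := r.2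
    have h1 : (b + 1) * ℓ ≤ n * ℓ := Nat.mul_le_mul_right _ hb
    have h2 : n ≤ n * ℓ := Nat.le_mul_of_pos_right _ r.pos
    have h3 : ℓ * (2 * n) = n * ℓ + n * ℓ := by ring
    rw [Nat.succ_mul] at h1
    omega
  simpa using Finset.card_le_card this

theorem core_quotient (ℓ : ℕ) (hl : 0 < ℓ) (n : ℕ) :
    Nat.card {p : AllPart // p.1 = n} =
    Nat.card {x : CorePart ℓ × (Fin ℓ → AllPart) // x.1.1.1 + ∑ r, ℓ * (x.2 r).1 = n} := by
  set N := ℓ * (2 * n) with hN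
  have hnN : n ≤ N := by rw [hN]; nlinarith
  rw [card_beads N n hnN]
  symm
  let X := {x : CorePart ℓ × (Fin ℓ → AllPart) // x.1.1.1 + ∑ r, ℓ * (x.2 r).1 = n}
  let k : X → Fin ℓ → ℕ := fun x r => (abSplit ℓ (betaSet x.1.1.1.2 N) r).card
  have hmu : ∀ x : X, x.1.1.1.1 ≤ n := fun x => by have := x.2; omega
  have hmuc : ∀ x : X, Multiset.card x.1.1.1.2.parts ≤ N := fun x =>
    (card_parts_le _).trans ((hmu x).trans hnN)
  have hk : ∀ x : X, ∀ r, n ≤ k x r := fun x r => runner_card ℓ n _ (hmu x) r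
  have hnu : ∀ x : X, ∀ r, Multiset.card (x.1.2 r).2.parts ≤ k x r := fun x r => by
    refine (card_parts_le _).trans (le_trans ?_ (hk x r))
    have h1 := Finset.single_le_sum (f := fun r => ℓ * (x.1.2 r).1) (fun _ _ => Nat.zero_le _)
      (Finset.mem_univ r)
    have h2 := x.2
    have h3 : (x.1.2 r).1 ≤ ℓ * (x.1.2 r).1 := Nat.le_mul_of_pos_left _ hl
    omega
  have hcore : ∀ x : X, betaSet x.1.1.1.2 N = abJoin ℓ (fun r => Finset.range (k x r)) := by
    intro x
    have hcl := (isCore_iff ℓ x.1.1.1 N (hmuc x)).1 x.1.1.2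
    rw [← join_split ℓ hl (betaSet x.1.1.1.2 N)]
    congr 1
    funext r
    exact closed_split hcl r
  have hksum : ∀ x : X, ∑ r, k x r = N := by
    intro x
    have := congrArg Finset.card (hcore x)
    rw [card_betaSet, card_abJoin] at this
    simpa using this.symm
  let f : X → Finset ℕ := fun x => abJoin ℓ (fun r => betaSet (x.1.2 r).2 (k x r))
  have hf1 : ∀ x, (f x).card = N := by
    intro x
    simp only [f, card_abJoin, card_betaSet, hksum]
  have hf2 : ∀ x, ∑ b ∈ f x, b = n + ∑ i ∈ Finset.range N, i := by
    intro x
    have h1 := sum_betaSet _ N (hmuc x)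
    rw [hcore x, sum_abJoin] at h1
    simp only [Finset.card_range] at h1
    simp only [f, sum_abJoin, card_betaSet]
    have h2 : ∀ r, ∑ b ∈ betaSet (x.1.2 r).2 (k x r), b = _ := fun r => sum_betaSet _ _ (hnu x r)
    simp only [h2, add_mul, Finset.sum_add_distrib] at h1 ⊢
    have h3 := x.2
    have h4 : ∑ r, (x.1.2 r).1 * ℓ = ∑ r, ℓ * (x.1.2 r).1 :=
      Finset.sum_congr rfl fun r _ => mul_comm _ _
    omega
  apply Nat.card_eq_of_bijective (fun x : X => (⟨f x, hf1 x, hf2 x⟩ : Beads N n))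
  constructor
  · intro x y hxy
    have hxy : f x = f y := congrArg Subtype.val hxy
    have hr : ∀ r, betaSet (x.1.2 r).2 (k x r) = betaSet (y.1.2 r).2 (k y r) := by
      intro r
      have := congrArg (fun B => abSplit ℓ B r) hxy
      simpa only [f, split_join] using this
    have hkk : k x = k y := by
      funext r
      have := congrArg Finset.card (hr r)
      simpa only [card_betaSet] using this
    apply Subtype.ext
    apply Prod.ext
    · apply Subtype.ext
      apply betaSet_inj _ _ N (hmuc x) (hmuc y)
      rw [hcore, hcore, hkk]
    · funext r
      apply betaSet_inj _ _ (k x r) (hnu x r) (by rw [hkk]; exact hnu y r)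
      rw [hr r, hkk]
  · rintro ⟨B, hB1, hB2⟩
    let kk : Fin ℓ → ℕ := fun r => (abSplit ℓ B r).card
    have hkk : ∑ r, kk r = N := by
      rw [← hB1, ← join_split ℓ hl B, card_abJoin]
    let Bc := abJoin ℓ (fun r => Finset.range (kk r))
    have hBc : Bc.card = N := by simp only [Bc, card_abJoin, Finset.card_range, hkk]
    obtain ⟨μ, hμ1, hμ2⟩ := betaSet_surj Bc
    rw [hBc] at hμ1 hμ2
    choose ν hν1 hν2 using fun r => betaSet_surj (abSplit ℓ B r)
    have hμc : IsCore ℓ μ.2 := by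
      rw [isCore_iff ℓ μ N hμ1, hμ2]
      exact closed_join_range hl kk
    have hsum : μ.1 + ∑ r, ℓ * (ν r).1 = n := by
      have h1 := sum_betaSet μ N hμ1
      rw [hμ2] at h1
      simp only [Bc, sum_abJoin, Finset.card_range] at h1
      have h2 := hB2
      rw [← join_split ℓ hl B, sum_abJoin] at h2
      have h3 : ∀ r, ∑ b ∈ abSplit ℓ B r, b = (ν r).1 + ∑ i ∈ Finset.range (kk r), i := by
        intro r
        have := sum_betaSet _ _ (hν1 r)
        rwa [hν2] at this
      have h5 : ∀ r, (abSplit ℓ B r).card = kk r := fun r => rfl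
      simp only [h3, h5, add_mul, Finset.sum_add_distrib] at h1 h2
      have h4 : ∑ r, (ν r).1 * ℓ = ∑ r, ℓ * (ν r).1 :=
        Finset.sum_congr rfl fun r _ => mul_comm _ _
      omega
    refine ⟨⟨(⟨μ, hμc⟩, ν), hsum⟩, ?_⟩
    apply Subtype.ext
    show abJoin ℓ (fun r => betaSet (ν r).2 ((abSplit ℓ (betaSet μ.2 N) r).card)) = B
    rw [← join_split ℓ hl B]
    congr 1
    funext r
    rw [hμ2, split_join, Finset.card_range]
    exact hν2 r

open PowerSeries in
/-- The counting generating function of a type graded by `wt`. -/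
noncomputable def GF {X : Type*} (wt : X → ℕ) : PowerSeries ℕ :=
  PowerSeries.mk fun n => Nat.card {x // wt x = n}

lemma coeff_GF {X : Type*} (wt : X → ℕ) (n : ℕ) :
    PowerSeries.coeff n (GF wt) = Nat.card {x // wt x = n} := by simp [GF]

/-- finite fibres -/
def FinFib {X : Type*} (wt : X → ℕ) : Prop := ∀ n, Finite {x // wt x = n}

lemma GF_scale {X Y : Type*} (f : X → ℕ) (g : Y → ℕ) (h : GF f = GF g) (k : ℕ) (hk : 0 < k) :
    GF (fun x => k * f x) = GF (fun y => k * g y) := by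
  ext n
  rw [coeff_GF, coeff_GF]
  by_cases hd : k ∣ n
  · obtain ⟨m, rfl⟩ := hd
    have := congrArg (PowerSeries.coeff m) h
    rw [coeff_GF, coeff_GF] at this
    simpa only [Nat.mul_right_inj hk.ne'] using this
  · have : IsEmpty {x // k * f x = n} := ⟨fun x => hd ⟨_, x.2.symm⟩⟩
    have : IsEmpty {x // k * g x = n} := ⟨fun x => hd ⟨_, x.2.symm⟩⟩
    simp

lemma FinFib.scale {X : Type*} {f : X → ℕ} (h : FinFib f) {k : ℕ} (hk : 0 < k) :
    FinFib (fun x => k * f x) := by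
  intro n
  have := h (n / k)
  refine Finite.of_injective
    (fun x => (⟨x.1, Nat.eq_div_of_mul_eq_right hk.ne' x.2⟩ : {x // f x = n / k})) ?_
  intro x y hxy
  exact Subtype.ext (congrArg (fun z => z.1) hxy)

lemma GF_prod {X Y : Type*} {f : X → ℕ} {g : Y → ℕ} (hf : FinFib f) (hg : FinFib g) :
    GF (fun x : X × Y => f x.1 + g x.2) = GF f * GF g := by
  ext n
  rw [PowerSeries.coeff_mul]
  simp only [coeff_GF]
  have := hf
  have := hg
  have e : {x : X × Y // f x.1 + g x.2 = n} ≃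
      Σ a : {a // a ∈ Finset.HasAntidiagonal.antidiagonal n}, {x // f x = a.1.1} × {y // g y = a.1.2} :=
    { toFun := fun x => ⟨⟨(f x.1.1, g x.1.2), by simpa using x.2⟩, ⟨x.1.1, rfl⟩, ⟨x.1.2, rfl⟩⟩
      invFun := fun s => ⟨(s.2.1.1, s.2.2.1), by
        have := s.1.2
        rw [Finset.HasAntidiagonal.mem_antidiagonal] at this
        simp only [s.2.1.2, s.2.2.2, this]⟩
      left_inv := fun x => rfl
      right_inv := by
        rintro ⟨⟨⟨a, b⟩, h⟩, ⟨x, hx⟩, ⟨y, hy⟩⟩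
        simp only at hx hy
        subst hx hy
        rfl }
  have hfin : ∀ a : {a // a ∈ Finset.HasAntidiagonal.antidiagonal n},
      Finite ({x // f x = a.1.1} × {y // g y = a.1.2}) := fun a => by
    have := hf a.1.1
    have := hg a.1.2
    infer_instance
  rw [Nat.card_congr e, Nat.card_sigma]
  simp only [Nat.card_prod]
  rw [Finset.sum_coe_sort (Finset.HasAntidiagonal.antidiagonal n)
    (fun a => Nat.card {x // f x = a.1} * Nat.card {y // g y = a.2})]

lemma GF_pi {J : Type*} [Fintype J] {X : Type*} {f : J → X → ℕ} (hf : ∀ j, FinFib (f j)) :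
    GF (fun v : J → X => ∑ j, f j (v j)) = ∏ j, GF (f j) := by
  classical
  ext n
  rw [PowerSeries.coeff_prod]
  simp only [coeff_GF]
  have e : {v : J → X // ∑ j, f j (v j) = n} ≃
      Σ a : {a // a ∈ Finset.finsuppAntidiag (Finset.univ : Finset J) n},
        ∀ j, {x // f j x = a.1 j} :=
    { toFun := fun v => ⟨⟨Finsupp.equivFunOnFinite.symm (fun j => f j (v.1 j)), by
        rw [Finset.mem_finsuppAntidiag]
        exact ⟨by simpa using v.2, Finset.subset_univ _⟩⟩, fun j => ⟨v.1 j, rfl⟩⟩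
      invFun := fun s => ⟨fun j => (s.2 j).1, by
        have := (Finset.mem_finsuppAntidiag.1 s.1.2).1
        simp only [(s.2 _).2]
        exact this⟩
      left_inv := fun x => rfl
      right_inv := by
        rintro ⟨⟨a, h⟩, v⟩
        obtain ⟨u, hu⟩ : ∃ u : J → X, u = fun j => (v j).1 := ⟨_, rfl⟩
        have hu' : ∀ j, f j (u j) = a j := fun j => by rw [hu]; exact (v j).2
        have hv : v = fun j => ⟨u j, hu' j⟩ := by funext j; apply Subtype.ext; exact (congrFun hu j).symm
        clear hu
        subst hv
        obtain rfl : a = Finsupp.equivFunOnFinite.symm (fun j => f j (u j)) := by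
          ext j; simpa using (hu' j).symm
        rfl }
  have hfin : ∀ a : {a // a ∈ Finset.finsuppAntidiag (Finset.univ : Finset J) n},
      Finite (∀ j, {x // f j x = a.1 j}) := fun a => by
    have := fun j => hf j (a.1 j)
    infer_instance
  rw [Nat.card_congr e, Nat.card_sigma]
  simp only [Nat.card_pi]
  rw [Finset.sum_coe_sort (Finset.finsuppAntidiag (Finset.univ : Finset J) n)
    (fun a => ∏ j, Nat.card {x // f j x = a j})]

lemma FinFib.pi {J : Type*} [Fintype J] {X : Type*} {f : J → X → ℕ} (hf : ∀ j, FinFib (f j)) :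
    FinFib (fun v : J → X => ∑ j, f j (v j)) := by
  intro n
  have h : ∀ j, Finite {x // f j x ≤ n} := by
    intro j
    have := hf j
    have : {x | f j x ≤ n} = ⋃ m ∈ Finset.range (n + 1), {x | f j x = m} := by
      ext x; simp
    have h2 : {x | f j x ≤ n}.Finite := by
      rw [this]
      exact Set.Finite.biUnion (Finset.finite_toSet _) fun m _ => Set.finite_coe_iff.1 (hf j m)
    exact h2.to_subtype
  refine Finite.of_injective (fun v : {v : J → X // ∑ j, f j (v j) = n} =>
    (fun j => (⟨v.1 j, (Finset.single_le_sum (f := fun j => f j (v.1 j))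
      (fun _ _ => Nat.zero_le _) (Finset.mem_univ j)).trans v.2.le⟩ : {x // f j x ≤ n}))) ?_
  intro v w hvw
  apply Subtype.ext
  funext j
  exact congrArg Subtype.val (congrFun hvw j)

lemma finFib_allPart : FinFib (fun p : AllPart => p.1) := by
  intro n
  refine Finite.of_injective (fun p : {p : AllPart // p.1 = n} =>
    (p.2 ▸ p.1.2 : Nat.Partition n)) ?_
  rintro ⟨⟨m, p⟩, h⟩ ⟨⟨k, q⟩, h'⟩ e
  simp only at h h'
  subst h h'
  simp only at e
  subst e
  rfl

lemma finFib_core (ℓ : ℕ) : FinFib (fun p : CorePart ℓ => p.1.1) := by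
  intro n
  have := finFib_allPart n
  refine Finite.of_injective (fun p : {p : CorePart ℓ // p.1.1 = n} =>
    (⟨p.1.1, p.2⟩ : {p : AllPart // p.1 = n})) ?_
  intro p q h
  apply Subtype.ext
  apply Subtype.ext
  exact congrArg (fun z => z.1) h

/-- Scaled generating functions of partitions and cores. -/
noncomputable def GP (k : ℕ) : PowerSeries ℕ := GF (fun p : AllPart => k * p.1)
noncomputable def GC (ℓ k : ℕ) : PowerSeries ℕ := GF (fun p : CorePart ℓ => k * p.1.1)

lemma GP_rec (ℓ k : ℕ) (hl : 0 < ℓ) (hk : 0 < k) : GP k = GC ℓ k * GP (k * ℓ) ^ ℓ := by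
  have h1 : GF (fun p : AllPart => p.1) =
      GF (fun x : CorePart ℓ × (Fin ℓ → AllPart) => x.1.1.1 + ∑ r, ℓ * (x.2 r).1) := by
    ext n
    rw [coeff_GF, coeff_GF]
    exact core_quotient ℓ hl n
  have h2 := GF_scale _ _ h1 k hk
  have h3 : (fun x : CorePart ℓ × (Fin ℓ → AllPart) => k * (x.1.1.1 + ∑ r, ℓ * (x.2 r).1)) =
      (fun x : CorePart ℓ × (Fin ℓ → AllPart) => (k * x.1.1.1) + ∑ r, (k * ℓ) * (x.2 r).1) := by
    funext x
    rw [mul_add, Finset.mul_sum]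
    simp only [mul_assoc]
  have hP : ∀ _ : Fin ℓ, FinFib (fun p : AllPart => (k * ℓ) * p.1) := fun _ =>
    finFib_allPart.scale (Nat.mul_pos hk hl)
  rw [h3, GF_prod (f := fun p : CorePart ℓ => k * p.1.1)
    (g := fun v : Fin ℓ → AllPart => ∑ r, (k * ℓ) * (v r).1)
    ((finFib_core ℓ).scale hk) (FinFib.pi hP), GF_pi hP] at h2
  simpa [GP, GC] using h2

lemma GP_iter (ℓ : ℕ) (hl : 0 < ℓ) (D : ℕ) :
    GP 1 = (∏ d ∈ Finset.range D, GC ℓ (ℓ ^ d) ^ (ℓ ^ d)) * GP (ℓ ^ D) ^ (ℓ ^ D) := by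
  induction D with
  | zero => simp
  | succ D ih =>
    conv_lhs => rw [ih, GP_rec ℓ (ℓ ^ D) hl (pow_pos hl _)]
    rw [Finset.prod_range_succ, mul_pow, ← pow_mul, ← mul_assoc]
    congr 2
    all_goals ring

lemma GP_high (n k : ℕ) (hk : n < k) : ∃ R, GP k = 1 + PowerSeries.X ^ (n + 1) * R := by
  refine ⟨PowerSeries.mk fun m => PowerSeries.coeff (m + (n + 1)) (GP k), ?_⟩
  ext m
  rw [map_add, PowerSeries.coeff_X_pow_mul', PowerSeries.coeff_one]
  by_cases h0 : m = 0
  · subst h0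
    simp only [if_true, GP, coeff_GF]
    rw [if_neg (by omega), add_zero, Nat.card_eq_one_iff_unique]
    refine ⟨⟨?_⟩, ⟨⟨⟨0, default⟩, by simp⟩⟩⟩
    rintro ⟨⟨a, p⟩, hp⟩ ⟨⟨b, q⟩, hq⟩
    simp only [mul_eq_zero] at hp hq
    obtain rfl : a = 0 := by omega
    obtain rfl : b = 0 := by omega
    have : p = q := Subsingleton.elim _ _
    subst this
    rfl
  · rw [if_neg h0, zero_add]
    split_ifs with h
    · rw [PowerSeries.coeff_mk]; congr 1; congr 1; omega
    · rw [GP, coeff_GF]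
      have : IsEmpty {x : AllPart // k * x.1 = m} := ⟨fun x => by
        have := x.2
        rcases Nat.eq_zero_or_pos x.1.1 with h | h
        · rw [h] at this; omega
        · have : k ≤ k * x.1.1 := Nat.le_mul_of_pos_right _ h
          omega⟩
      simp

lemma pow_high (n : ℕ) (A : PowerSeries ℕ) (h : ∃ R, A = 1 + PowerSeries.X ^ (n + 1) * R) (e : ℕ) :
    ∃ R, A ^ e = 1 + PowerSeries.X ^ (n + 1) * R := by
  obtain ⟨R, hR⟩ := h
  induction e with
  | zero => exact ⟨0, by simp⟩
  | succ e ih =>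
    obtain ⟨S, hS⟩ := ih
    refine ⟨R + S + S * (PowerSeries.X ^ (n + 1) * R), ?_⟩
    rw [pow_succ, hS, hR]; ring

lemma coeff_GP_sq (ℓ : ℕ) (hl : 1 < ℓ) (n : ℕ) :
    PowerSeries.coeff n (GP 1 * GP 1) = PowerSeries.coeff n
      (∏ d ∈ Finset.range (n + 1), GC ℓ (ℓ ^ d) ^ (2 * ℓ ^ d)) := by
  rw [GP_iter ℓ (by omega) (n + 1), ← sq, mul_pow, ← Finset.prod_pow, ← pow_mul]
  have hlt : n < ℓ ^ (n + 1) := lt_trans (Nat.lt_succ_self n) (Nat.lt_pow_self hl)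
  obtain ⟨R, hR⟩ := pow_high n _ (GP_high n _ hlt) (ℓ ^ (n + 1) * 2)
  rw [hR, mul_add, mul_one, mul_left_comm, map_add, PowerSeries.coeff_X_pow_mul',
    if_neg (by omega), add_zero]
  simp only [← pow_mul, mul_comm]

/-- index triples `(a, 𝔠, j)` -/
abbrev KIdx (ℓ : ℕ) := ℕ × Σ c : List ℕ+, Fin ((ℓ - 1) ^ c.length)

/-- full index quadruples -/
abbrev WIdx (ℓ : ℕ) := ℕ × Fin 2 × Σ c : List ℕ+, Fin ((ℓ - 1) ^ c.length)

/-- degree of a triple -/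
def kdeg {ℓ : ℕ} (k : KIdx ℓ) : ℕ := k.1 + csum k.2.1

/-- degree of a quadruple -/
def wdeg {ℓ : ℕ} (i : WIdx ℓ) : ℕ := i.1 + csum i.2.2.1

lemma csum_cons (x : ℕ+) (c : List ℕ+) : csum (x :: c) = x + csum c := by simp [csum]

/-- splitting off the last digit -/
def digitEquiv (M t : ℕ) : Fin (M ^ t) × Fin M ≃ Fin (M ^ (t + 1)) :=
  finProdFinEquiv.trans (finCongr (pow_succ M t).symm)

/-- the successor map on triples -/
def ksucc (ℓ : ℕ) : KIdx ℓ × Option (Fin (ℓ - 1)) → KIdx ℓ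
  | ((a, c), none) => (a + 1, c)
  | ((a, ⟨c, j⟩), some i) => (0, ⟨Nat.succPNat a :: c, digitEquiv (ℓ - 1) c.length (j, i)⟩)

lemma kdeg_ksucc (ℓ : ℕ) (x : KIdx ℓ × Option (Fin (ℓ - 1))) :
    kdeg (ksucc ℓ x) = kdeg x.1 + 1 := by
  obtain ⟨⟨a, c, j⟩, _ | i⟩ := x
  · simp only [ksucc, kdeg]; omega
  · simp only [ksucc, kdeg, csum_cons, Nat.succPNat_coe]; omega

lemma ksucc_inj (ℓ : ℕ) : Function.Injective (ksucc ℓ) := by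
  rintro ⟨⟨a, c, j⟩, _ | i⟩ ⟨⟨a', c', j'⟩, _ | i'⟩ h
  · simp only [ksucc, Prod.mk.injEq, add_left_inj] at h
    obtain ⟨rfl, h⟩ := h
    rw [h]
  · simp [ksucc] at h
  · simp [ksucc] at h
  · simp only [ksucc, Prod.mk.injEq, true_and, Sigma.mk.injEq, List.cons.injEq] at h
    obtain ⟨⟨h1, rfl⟩, h2⟩ := h
    obtain rfl := Nat.succPNat_injective h1
    have h3 := (digitEquiv (ℓ - 1) c.length).injective (eq_of_heq h2)
    simp only [Prod.mk.injEq] at h3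
    obtain ⟨rfl, rfl⟩ := h3
    rfl

lemma ksucc_surj (ℓ : ℕ) (k : KIdx ℓ) (hk : kdeg k ≠ 0) : ∃ x, ksucc ℓ x = k := by
  obtain ⟨a, c, j⟩ := k
  cases a with
  | succ a => exact ⟨((a, ⟨c, j⟩), none), rfl⟩
  | zero =>
    cases c with
    | nil => simp [kdeg, csum] at hk
    | cons x c =>
      obtain ⟨⟨j', i⟩, hj⟩ := (digitEquiv (ℓ - 1) c.length).surjective j
      refine ⟨(((x : ℕ) - 1, ⟨c, j'⟩), some i), ?_⟩
      have hx : Nat.succPNat ((x : ℕ) - 1) = x := by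
        apply PNat.eq
        have := x.pos
        simp only [Nat.succPNat_coe]; omega
      simp only [ksucc, hj]
      rw [hx]

lemma card_kdeg (ℓ : ℕ) (hl : 0 < ℓ) (d : ℕ) : Nat.card {k : KIdx ℓ // kdeg k = d} = ℓ ^ d := by
  induction d with
  | zero =>
    rw [pow_zero, Nat.card_eq_one_iff_unique]
    refine ⟨⟨?_⟩, ⟨⟨(0, ⟨[], ⟨0, by simp⟩⟩), by simp [kdeg, csum]⟩⟩⟩
    have key : ∀ k : KIdx ℓ, kdeg k = 0 → k = (0, ⟨[], ⟨0, by simp⟩⟩) := by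
      rintro ⟨a, c, j⟩ h
      cases c with
      | cons x c =>
        have := x.pos
        simp only [kdeg, csum_cons] at h
        omega
      | nil =>
        have ha : a = 0 := by simp only [kdeg] at h; omega
        subst ha
        have : j = ⟨0, by simp⟩ := by
          apply Fin.ext
          have := j.2
          simp only [List.length_nil, pow_zero] at this
          simp only
          omega
        rw [this]
    intro x y
    apply Subtype.ext
    rw [key _ x.2, key _ y.2]
  | succ d ih =>
    have e : Nat.card ({k : KIdx ℓ // kdeg k = d} × Option (Fin (ℓ - 1))) =
        Nat.card {k : KIdx ℓ // kdeg k = d + 1} := by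
      apply Nat.card_eq_of_bijective
        (fun x => ⟨ksucc ℓ (x.1.1, x.2), by rw [kdeg_ksucc, x.1.2]⟩)
      constructor
      · rintro ⟨⟨x, hx⟩, o⟩ ⟨⟨y, hy⟩, o'⟩ h
        have := ksucc_inj ℓ (congrArg Subtype.val h)
        simp only [Prod.mk.injEq] at this
        obtain ⟨rfl, rfl⟩ := this
        rfl
      · rintro ⟨k, hk⟩
        obtain ⟨x, rfl⟩ := ksucc_surj ℓ k (by omega)
        refine ⟨(⟨x.1, ?_⟩, x.2), rfl⟩
        rw [kdeg_ksucc] at hk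
        omega
    rw [← e, Nat.card_prod, ih, pow_succ]
    congr 1
    simp [Nat.card_eq_fintype_card]
    omega

lemma card_wdeg (ℓ : ℕ) (hl : 0 < ℓ) (d : ℕ) :
    Nat.card {i : WIdx ℓ // wdeg i = d} = 2 * ℓ ^ d := by
  have e : Nat.card (Fin 2 × {k : KIdx ℓ // kdeg k = d}) = Nat.card {i : WIdx ℓ // wdeg i = d} :=
    Nat.card_congr
      { toFun := fun x => ⟨(x.2.1.1, x.1, x.2.1.2), x.2.2⟩
        invFun := fun i => (i.1.2.1, ⟨(i.1.1, i.1.2.2), i.2⟩)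
        left_inv := fun _ => rfl
        right_inv := fun _ => rfl }
  rw [← e, Nat.card_prod, card_kdeg ℓ hl]
  simp

/-- the relevant finite index set -/
abbrev JIdx (ℓ n : ℕ) := {i : WIdx ℓ // wdeg i < n + 1}

lemma finite_wdeg (ℓ : ℕ) (hl : 0 < ℓ) (d : ℕ) : Finite {i : WIdx ℓ // wdeg i = d} := by
  apply Nat.finite_of_card_ne_zero
  rw [card_wdeg ℓ hl]
  positivity

lemma finite_JIdx (ℓ n : ℕ) (hl : 0 < ℓ) : Finite (JIdx ℓ n) := by
  have : {i : WIdx ℓ | wdeg i < n + 1} = ⋃ d ∈ Finset.range (n + 1), {i | wdeg i = d} := by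
    ext x; simp
  have h2 : {i : WIdx ℓ | wdeg i < n + 1}.Finite := by
    rw [this]
    exact Set.Finite.biUnion (Finset.finite_toSet _) fun m _ =>
      Set.finite_coe_iff.1 (finite_wdeg ℓ hl m)
  exact h2.to_subtype

lemma prod_JIdx (ℓ n : ℕ) (hl : 0 < ℓ) [Fintype (JIdx ℓ n)] (F : ℕ → PowerSeries ℕ) :
    ∏ j : JIdx ℓ n, F (wdeg j.1) = ∏ d ∈ Finset.range (n + 1), F d ^ (2 * ℓ ^ d) := by
  classical
  rw [← Finset.prod_fiberwise_of_maps_to (s := Finset.univ) (t := Finset.range (n + 1))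
    (g := fun j : JIdx ℓ n => wdeg j.1) (fun j _ => Finset.mem_range.2 j.2)]
  refine Finset.prod_congr rfl fun d hd => ?_
  rw [Finset.prod_congr rfl (g := fun _ => F d) (fun j hj => by rw [(Finset.mem_filter.1 hj).2]),
    Finset.prod_const]
  congr 1
  rw [← card_wdeg ℓ hl d, ← Fintype.card_subtype, ← Nat.card_eq_fintype_card]
  exact Nat.card_congr
    { toFun := fun x => ⟨x.1.1, x.2⟩
      invFun := fun i => ⟨⟨i.1, by rw [i.2]; exact Finset.mem_range.1 hd⟩, i.2⟩
      left_inv := fun _ => rfl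
      right_inv := fun _ => rfl }

lemma finsum_JIdx (ℓ n : ℕ) [Fintype (JIdx ℓ n)] (f : WIdx ℓ → ℕ)
    (h : ∀ i, ¬ wdeg i < n + 1 → f i = 0) : ∑ᶠ i, f i = ∑ j : JIdx ℓ n, f j.1 := by
  rw [finsum_eq_sum_of_support_subset f
    (s := Finset.univ.map (Function.Embedding.subtype (fun i : WIdx ℓ => wdeg i < n + 1))),
    Finset.sum_map]
  · rfl
  · intro i hi
    simp only [Finset.coe_map, Finset.coe_univ, Set.image_univ, Set.mem_range]
    refine ⟨⟨i, ?_⟩, rfl⟩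
    by_contra hc
    exact hi (h i hc)

/-- the empty partition -/
def emptyPart : AllPart := ⟨0, Nat.Partition.indiscrete 0⟩

lemma eq_emptyPart (p : AllPart) (h : p.1 = 0) : p = emptyPart := by
  obtain ⟨m, p⟩ := p
  simp only at h
  subst h
  exact congrArg (Sigma.mk 0) (Subsingleton.elim _ _)

lemma core_empty (ℓ : ℕ) : IsCore ℓ emptyPart.2 := by
  rw [isCore_iff ℓ emptyPart 0 (card_parts_le _)]
  intro b hb
  simp [betaSet] at hb

lemma count_weights (ℓ : ℕ) (hl : 1 < ℓ) (n : ℕ) :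
    Set.ncard { w : WIdx ℓ → AllPart |
      (∀ i, IsCore ℓ (w i).2) ∧
      { i | (w i).1 ≠ 0 }.Finite ∧
      ∑ᶠ i : WIdx ℓ, ℓ ^ (i.1 + csum i.2.2.1) * (w i).1 = n } =
    PowerSeries.coeff n (∏ d ∈ Finset.range (n + 1), GC ℓ (ℓ ^ d) ^ (2 * ℓ ^ d)) := by
  classical
  have hl0 : 0 < ℓ := by omega
  have hfinJ := finite_JIdx ℓ n hl0
  have := Fintype.ofFinite (JIdx ℓ n)
  have hF : ∀ j : JIdx ℓ n, FinFib (fun p : CorePart ℓ => ℓ ^ wdeg j.1 * p.1.1) := fun j =>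
    (finFib_core ℓ).scale (pow_pos hl0 _)
  have hG : ∏ j : JIdx ℓ n, GC ℓ (ℓ ^ wdeg j.1) = _ := (GF_pi hF).symm
  rw [← prod_JIdx ℓ n hl0 (fun d => GC ℓ (ℓ ^ d)), hG, coeff_GF, ← Nat.card_coe_set_eq]
  symm
  let ext : (JIdx ℓ n → CorePart ℓ) → WIdx ℓ → AllPart := fun v i =>
    if h : wdeg i < n + 1 then (v ⟨i, h⟩).1 else emptyPart
  have ext_in : ∀ v (j : JIdx ℓ n), ext v j.1 = (v j).1 := fun v j => dif_pos j.2
  have ext_out : ∀ v i, ¬ wdeg i < n + 1 → ext v i = emptyPart := fun v i h => dif_neg h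
  have ext_sum : ∀ v, ∑ᶠ i : WIdx ℓ, ℓ ^ (i.1 + csum i.2.2.1) * (ext v i).1 =
      ∑ j : JIdx ℓ n, ℓ ^ wdeg j.1 * (v j).1.1 := by
    intro v
    rw [finsum_JIdx ℓ n (fun i => ℓ ^ (i.1 + csum i.2.2.1) * (ext v i).1)]
    · refine Finset.sum_congr rfl fun j _ => ?_
      rw [ext_in]; rfl
    · intro i hi
      rw [ext_out v i hi]; rfl
  apply Nat.card_eq_of_bijective (fun v => ⟨ext v.1, by
    refine ⟨?_, ?_, ?_⟩
    · intro i
      by_cases h : wdeg i < n + 1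
      · have := ext_in v.1 ⟨i, h⟩
        simp only at this
        rw [this]; exact (v.1 ⟨i, h⟩).2
      · rw [ext_out _ _ h]; exact core_empty ℓ
    · refine Set.Finite.subset (Set.finite_coe_iff.1 hfinJ) (s := {i | wdeg i < n + 1}) ?_
      intro i hi
      by_contra hc
      exact hi (by rw [ext_out _ _ hc]; rfl)
    · rw [ext_sum, v.2]⟩)
  constructor
  · intro v v' h
    have h : ext v.1 = ext v'.1 := congrArg Subtype.val h
    apply Subtype.ext
    funext j
    apply Subtype.ext
    rw [← ext_in, ← ext_in, h]
  · rintro ⟨w, hw1, hw2, hw3⟩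
    have hout : ∀ i, ¬ wdeg i < n + 1 → w i = emptyPart := by
      intro i hi
      apply eq_emptyPart
      by_contra hc
      have h1 : ℓ ^ (i.1 + csum i.2.2.1) * (w i).1 ≤ n := by
        rw [← hw3]
        refine single_le_finsum (f := fun i : WIdx ℓ => ℓ ^ (i.1 + csum i.2.2.1) * (w i).1) i ?_
          (fun _ => Nat.zero_le _)
        refine hw2.subset ?_
        intro i hi h0
        exact hi (by simp only [h0, mul_zero])
      have h2 : n < ℓ ^ (i.1 + csum i.2.2.1) := by
        have : n < wdeg i := by omega
        exact this.trans (Nat.lt_pow_self hl)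
      have h3 := Nat.le_mul_of_pos_right (ℓ ^ (i.1 + csum i.2.2.1)) (Nat.pos_of_ne_zero hc)
      omega
    let v0 : JIdx ℓ n → CorePart ℓ := fun j => ⟨w j.1, hw1 j.1⟩
    have hext : ext v0 = w := by
      funext i
      by_cases h : wdeg i < n + 1
      · exact ext_in v0 ⟨i, h⟩
      · rw [ext_out _ _ h, hout i h]
    refine ⟨⟨v0, ?_⟩, Subtype.ext hext⟩
    have := ext_sum v0
    rw [hext, hw3] at this
    exact this.symm

lemma count_bipartitions (n : ℕ) :
    Set.ncard { pq : AllPart × AllPart | pq.1.1 + pq.2.1 = n } =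
      PowerSeries.coeff n (GP 1 * GP 1) := by
  have hP : GP 1 = GF (fun p : AllPart => p.1) := by simp only [GP, one_mul]
  rw [hP, ← GF_prod finFib_allPart finFib_allPart, coeff_GF, ← Nat.card_coe_set_eq]
  rfl

/-- Let `ℓ` be an odd prime and `n` a natural number.  The number of finitely supported
functions `w` assigning to each quadruple `(a, x, 𝔠, j)` — with `a ∈ ℕ`, `x ∈ {0,1}`,
`𝔠 ∈ 𝒞` a finite sequence of positive integers, and `j` ranging over `(ℓ-1)^{t(𝔠)}`
values — an `ℓ`-core partition `w (a, x, 𝔠, j)`, subject to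
`∑ ℓ^{a + |𝔠|} * |w (a, x, 𝔠, j)| = n`, equals the number of bipartitions of `n`. -/
theorem weight_count_Sp_SO_odd (ℓ : ℕ) (hℓ : ℓ.Prime) (hodd : Odd ℓ) (n : ℕ) :
    Set.ncard { w : (ℕ × Fin 2 × Σ c : List ℕ+, Fin ((ℓ - 1) ^ c.length)) →
        Σ m : ℕ, Nat.Partition m |
      (∀ i, IsCore ℓ (w i).2) ∧
      { i | (w i).1 ≠ 0 }.Finite ∧
      ∑ᶠ i : ℕ × Fin 2 × Σ c : List ℕ+, Fin ((ℓ - 1) ^ c.length),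
        ℓ ^ (i.1 + csum i.2.2.1) * (w i).1 = n } =
    Set.ncard { pq : (Σ m : ℕ, Nat.Partition m) × (Σ m : ℕ, Nat.Partition m) |
      pq.1.1 + pq.2.1 = n } := by
  rw [count_bipartitions, coeff_GP_sq ℓ hℓ.one_lt]
  exact count_weights ℓ hℓ.one_lt n
end
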